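/- arXiv:1611.04464 — 2 statements merged into one kernel-verified Lean document; each statement's English description precedes it below -/
import Mathlib

section
/- Let Ω_j be an increasing sequence of open subsets of ℂⁿ (Ω_j ⊆ Ω_{j+1}) with Ω = ∪_j Ω_j bounded. Fix z ∈ Ω and δ ∈ (0,1). If for all sufficiently large j (so that z ∈ Ω_j) the squeezing function satisfies S_{Ω_j}(z) > 1 - δ, then S_Ω(z) ≥ 1 - δ. -/
open Metric Set

/-- The squeezing function of a domain Ω ⊆ ℂⁿ at z: the supremum of radii r > 0
such that some injective holomorphic map f : Ω → 𝔹ⁿ with f(z) = 0 has image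
containing the ball B_r(0). -/
noncomputable def squeezingFun {n : ℕ} (Ω : Set (EuclideanSpace ℂ (Fin n)))
    (z : EuclideanSpace ℂ (Fin n)) : ℝ :=
  sSup {r : ℝ | 0 < r ∧ ∃ f : EuclideanSpace ℂ (Fin n) → EuclideanSpace ℂ (Fin n),
    DifferentiableOn ℂ f Ω ∧ Set.InjOn f Ω ∧ f z = 0 ∧
    f '' Ω ⊆ ball 0 1 ∧ ball 0 r ⊆ f '' Ω}

open Filter Topology in
theorem sq_quad {E F : Type} [NormedAddCommGroup E] [NormedSpace ℂ E] [NormedAddCommGroup F]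
    [NormedSpace ℂ F] {f : E → F} {c : E} {R M : ℝ} (hR : 0 < R)
    (hd : DifferentiableOn ℂ f (ball c R)) (hM : ∀ y ∈ ball c R, ‖f y‖ ≤ M) :
    ‖fderiv ℂ f c‖ ≤ 2 * M / R ∧
    ∀ y ∈ ball c R, ‖f y - f c - fderiv ℂ f c (y - c)‖ ≤ 4 * M / R ^ 2 * ‖y - c‖ ^ 2 := by
  have hM0 : 0 ≤ M := (norm_nonneg _).trans (hM c (mem_ball_self hR))
  have hmaps : MapsTo f (ball c R) (closedBall (f c) (2 * M)) := by
    intro y hy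
    rw [mem_closedBall, dist_eq_norm]
    have := norm_sub_le (f y) (f c)
    linarith [hM y hy, hM c (mem_ball_self hR)]
  have h1 := Complex.norm_fderiv_le_div_of_mapsTo_ball hd hmaps hR
  refine ⟨h1, fun y hy => ?_⟩
  have hda : DifferentiableAt ℂ f c := hd.differentiableAt (ball_mem_nhds c hR)
  have key := Complex.dist_le_mul_div_pow_of_mapsTo_ball_of_isLittleO (n := 1)
    (f := fun y => f y - fderiv ℂ f c (y - c)) (c := c) (z := y) (R₁ := R) (R₂ := 4 * M)
    (hd.sub (by fun_prop)) ?_ ?_ hy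
  · simp only [sub_self, map_zero, sub_zero, dist_eq_norm] at key
    have e : f y - f c - fderiv ℂ f c (y - c) = f y - fderiv ℂ f c (y - c) - f c := by abel
    rw [e]
    refine key.trans (le_of_eq ?_)
    rw [div_pow]; ring
  · intro y hy
    rw [mem_closedBall, dist_eq_norm]
    simp only [sub_self, map_zero, sub_zero]
    have a1 := hmaps hy
    rw [mem_closedBall, dist_eq_norm] at a1
    have a2 : ‖fderiv ℂ f c (y - c)‖ ≤ 2 * M := by
      calc _ ≤ ‖fderiv ℂ f c‖ * ‖y - c‖ := ContinuousLinearMap.le_opNorm _ _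
        _ ≤ 2 * M / R * R := by
          have : ‖y - c‖ ≤ R := by
            rw [← dist_eq_norm]; exact (mem_ball.1 hy).le
          gcongr
        _ = 2 * M := by field_simp
    have e : f y - fderiv ℂ f c (y - c) - f c = (f y - f c) - fderiv ℂ f c (y - c) := by abel
    rw [e]
    linarith [norm_sub_le (f y - f c) (fderiv ℂ f c (y - c))]
  · simp only [sub_self, map_zero, sub_zero, pow_one]
    have := hda.hasFDerivAt.isLittleO
    refine (this.norm_right).congr_left (fun x => by abel)

theorem sq_approx {E F : Type} [NormedAddCommGroup E] [NormedSpace ℂ E] [NormedAddCommGroup F]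
    [NormedSpace ℂ F] {f : E → F} {c : E} {R M ε : ℝ} (hε : 0 < ε) (hεR : 2 * ε ≤ R)
    (hd : DifferentiableOn ℂ f (ball c R)) (hM : ∀ y ∈ ball c R, ‖f y‖ ≤ M) :
    (∀ x ∈ ball c ε, ‖fderiv ℂ f x - fderiv ℂ f c‖ ≤ 32 * M / R ^ 2 * ε) ∧
    (∀ x ∈ ball c ε, ∀ y ∈ ball c ε, ‖f x - f y - fderiv ℂ f c (x - y)‖
      ≤ 32 * M / R ^ 2 * ε * ‖x - y‖) := by
  have hR : 0 < R := by linarith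
  have hM0 : 0 ≤ M := (norm_nonneg _).trans (hM c (mem_ball_self hR))
  obtain ⟨-, hq⟩ := sq_quad hR hd hM
  set G : E → F := fun y => f y - f c - fderiv ℂ f c (y - c) with hG
  have hGd : DifferentiableOn ℂ G (ball c R) := by
    apply DifferentiableOn.sub
    · exact hd.sub_const _
    · fun_prop
  have hfd : ∀ x ∈ ball c R, fderiv ℂ G x = fderiv ℂ f x - fderiv ℂ f c := by
    intro x hx
    have h1 : HasFDerivAt f (fderiv ℂ f x) x :=
      (hd.differentiableAt (isOpen_ball.mem_nhds hx)).hasFDerivAt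
    have h2 : HasFDerivAt (fun y => fderiv ℂ f c (y - c)) (fderiv ℂ f c) x := by
      have h3 := (fderiv ℂ f c).hasFDerivAt.comp x ((hasFDerivAt_id x).sub_const c)
      rw [ContinuousLinearMap.comp_id] at h3
      exact h3
    exact ((h1.sub_const (f c)).sub h2).fderiv
  have hb : ∀ x ∈ ball c ε, ‖fderiv ℂ G x‖ ≤ 32 * M / R ^ 2 * ε := by
    intro x hx
    have hsub : ball x ε ⊆ ball c (2 * ε) := by
      apply ball_subset_ball'
      rw [mem_ball] at hx; linarith
    have := (sq_quad (f := G) (c := x) (M := 4 * M / R ^ 2 * (2 * ε) ^ 2) hε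
      (hGd.mono (hsub.trans (ball_subset_ball hεR))) (fun y hy => ?_)).1
    · refine this.trans (le_of_eq ?_)
      field_simp; ring
    · have h2 := hsub hy
      refine (hq y (ball_subset_ball hεR h2)).trans ?_
      rw [mem_ball, dist_eq_norm] at h2
      gcongr
  have hsubε : ball c ε ⊆ ball c R := ball_subset_ball (by linarith)
  refine ⟨fun x hx => ?_, fun x hx y hy => ?_⟩
  · rw [← hfd x (hsubε hx)]; exact hb x hx
  · have := (convex_ball c ε).norm_image_sub_le_of_norm_fderiv_le (𝕜 := ℂ) (f := G)
      (fun z hz => hGd.differentiableAt (isOpen_ball.mem_nhds (hsubε hz))) hb hy hx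
    have e : G x - G y = f x - f y - fderiv ℂ f c (x - y) := by
      simp only [hG, map_sub]; abel
    rwa [e] at this

open Filter Topology in
theorem sq_ultra {ι E : Type} [NormedAddCommGroup E] [ProperSpace E] (l : Ultrafilter ι)
    (F : ι → E) (M : ℝ) (h : ∀ᶠ i in (l : Filter ι), ‖F i‖ ≤ M) :
    ∃ a, ‖a‖ ≤ M ∧ Tendsto F l (𝓝 a) := by
  have hc := isCompact_closedBall (0 : E) M
  obtain ⟨a, ha, hl⟩ := hc.ultrafilter_le_nhds (l.map F) (by
    rw [le_principal_iff]
    change ∀ᶠ i in (l : Filter ι), F i ∈ closedBall 0 M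
    simpa using h)
  exact ⟨a, by simpa using ha, hl⟩

open Filter Topology in
/-- pointwise ultralimits of bounded holomorphic maps are holomorphic -/
theorem sq_weier {ι E F : Type} [NormedAddCommGroup E] [NormedSpace ℂ E] [FiniteDimensional ℂ E]
    [NormedAddCommGroup F] [NormedSpace ℂ F] [FiniteDimensional ℂ F]
    (l : Ultrafilter ι) (f : ι → E → F) (g : E → F) (c : E) {R M : ℝ} (hR : 0 < R)
    (h : ∀ᶠ i in (l : Filter ι), DifferentiableOn ℂ (f i) (ball c R) ∧ ∀ y ∈ ball c R, ‖f i y‖ ≤ M)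
    (hg : ∀ y ∈ ball c R, Tendsto (fun i => f i y) l (𝓝 (g y))) :
    DifferentiableAt ℂ g c ∧ Tendsto (fun i => fderiv ℂ (f i) c) l (𝓝 (fderiv ℂ g c)) := by
  have : ProperSpace (E →L[ℂ] F) := FiniteDimensional.proper ℂ _
  obtain ⟨A, -, hA⟩ := sq_ultra l (fun i => fderiv ℂ (f i) c) (2 * M / R) (by
    filter_upwards [h] with i hi
    exact (sq_quad hR hi.1 hi.2).1)
  have hb : ∀ y ∈ ball c R, ‖g y - g c - A (y - c)‖ ≤ 4 * M / R ^ 2 * ‖y - c‖ ^ 2 := by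
    intro y hy
    have h1 : Tendsto (fun i => ‖f i y - f i c - fderiv ℂ (f i) c (y - c)‖) l
        (𝓝 ‖g y - g c - A (y - c)‖) := by
      refine (((hg y hy).sub (hg c (mem_ball_self hR))).sub ?_).norm
      exact ((ContinuousLinearMap.apply ℂ F (y - c)).continuous.tendsto A).comp hA
    refine le_of_tendsto h1 ?_
    filter_upwards [h] with i hi
    exact (sq_quad hR hi.1 hi.2).2 y hy
  have hD : HasFDerivAt g A c := by
    rw [hasFDerivAt_iff_isLittleO]
    have h2 : (fun y => g y - g c - A (y - c)) =O[𝓝 c] fun y => ‖y - c‖ ^ 2 := by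
      apply Asymptotics.IsBigO.of_bound (4 * M / R ^ 2)
      filter_upwards [ball_mem_nhds c hR] with y hy
      simpa using hb y hy
    refine h2.trans_isLittleO ?_
    have h3 : (fun v : E => ‖v‖ ^ 2) =o[𝓝 0] fun v => v := by
      have := Asymptotics.isLittleO_norm_pow_id (E' := E) one_lt_two
      exact this
    have h4 : Tendsto (fun y : E => y - c) (𝓝 c) (𝓝 0) := by
      have : Continuous fun y : E => y - c := by fun_prop
      simpa using this.tendsto c
    exact h3.comp_tendsto h4
  exact ⟨hD.differentiableAt, by rw [hD.fderiv]; exact hA⟩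

open Filter Topology

theorem sq_lip {E F : Type} [NormedAddCommGroup E] [NormedSpace ℂ E] [NormedAddCommGroup F]
    [NormedSpace ℂ F] {f : E → F} {c : E} {R M : ℝ}
    (hd : DifferentiableOn ℂ f (ball c R)) (hM : ∀ y ∈ ball c R, ‖f y‖ ≤ M) :
    ∀ y ∈ ball c R, ‖f y - f c‖ ≤ 2 * M / R * ‖y - c‖ := by
  intro y hy
  have hR : 0 < R := nonempty_ball.1 ⟨y, hy⟩
  have hmaps : MapsTo f (ball c R) (closedBall (f c) (2 * M)) := by
    intro y hy
    rw [mem_closedBall, dist_eq_norm]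
    have := norm_sub_le (f y) (f c)
    linarith [hM y hy, hM c (mem_ball_self hR)]
  simpa [dist_eq_norm] using Complex.dist_le_div_mul_dist_of_mapsTo_ball hd hmaps hy

theorem sq_bdd {E F : Type} [NormedAddCommGroup E] [NormedSpace ℂ E] [NormedAddCommGroup F]
    [NormedSpace ℂ F] {f : E → F} {U : Set E} (hU : IsOpen U) (hd : DifferentiableOn ℂ f U)
    {x : E} (hx : x ∈ U) :
    ∃ R > 0, ∃ M, ball x R ⊆ U ∧ ∀ y ∈ ball x R, ‖f y‖ ≤ M := by
  have hc : ContinuousAt f x := (hd.differentiableAt (hU.mem_nhds hx)).continuousAt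
  have h1 : ∀ᶠ y in 𝓝 x, ‖f y‖ < ‖f x‖ + 1 :=
    hc.norm.eventually (gt_mem_nhds (by simp : ‖f x‖ < ‖f x‖ + 1))
  obtain ⟨R, hR, h⟩ := Metric.eventually_nhds_iff_ball.1 (h1.and (hU.mem_nhds hx))
  exact ⟨R, hR, _, fun y hy => (h y hy).2, fun y hy => (h y hy).1.le⟩

theorem sq_diff_fderiv {E F : Type} [NormedAddCommGroup E] [NormedSpace ℂ E]
    [FiniteDimensional ℂ E] [NormedAddCommGroup F] [NormedSpace ℂ F] [FiniteDimensional ℂ F]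
    {f : E → F} {U : Set E} (hU : IsOpen U) (hd : DifferentiableOn ℂ f U) (v : E) :
    DifferentiableOn ℂ (fun x => fderiv ℂ f x v) U := by
  intro x hx
  obtain ⟨R, hR, M, hsub, hM⟩ := sq_bdd hU hd hx
  apply DifferentiableAt.differentiableWithinAt
  have hle := Ultrafilter.of_le (𝓝[≠] (0 : ℂ))
  refine (sq_weier (Ultrafilter.of (𝓝[≠] (0 : ℂ))) (fun t y => t⁻¹ • (f (y + t • v) - f y))
    _ x (R := R / 2) (M := 4 * M / R * ‖v‖) (by positivity) ?_ ?_).1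
  · have h1 : ∀ᶠ t in 𝓝[≠] (0 : ℂ), ‖t • v‖ < R / 2 := by
      have : ContinuousAt (fun t : ℂ => ‖t • v‖) 0 := by fun_prop
      apply (this.eventually (gt_mem_nhds (by simpa using hR))).filter_mono nhdsWithin_le_nhds
    have h2 : ∀ᶠ t in 𝓝[≠] (0 : ℂ), t ≠ 0 := eventually_mem_nhdsWithin
    filter_upwards [hle h1, hle h2] with t ht ht0
    have hin : ∀ y ∈ ball x (R / 2), y + t • v ∈ ball x R := by
      intro y hy
      rw [mem_ball, dist_eq_norm] at hy ⊢
      have e : y + t • v - x = (y - x) + t • v := by abel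
      rw [e]
      have ht' : ‖t • v‖ < R / 2 := ht
      linarith [norm_add_le (y - x) (t • v)]
    refine ⟨?_, fun y hy => ?_⟩
    · apply DifferentiableOn.const_smul
      apply DifferentiableOn.sub
      · exact (hd.mono hsub).comp (by fun_prop) hin
      · exact (hd.mono hsub).mono (ball_subset_ball (by linarith))
    · have hs : ball y (R / 2) ⊆ ball x R := by
        apply ball_subset_ball'
        rw [mem_ball] at hy; linarith
      have ht' : ‖t • v‖ < R / 2 := ht
      have := sq_lip (f := f) (c := y) (R := R / 2) (M := M) ((hd.mono hsub).mono hs)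
        (fun w hw => hM w (hs hw)) (y + t • v) (by simpa [mem_ball, dist_eq_norm] using ht')
      rw [norm_smul, norm_inv]
      have ht0' : 0 < ‖t‖ := norm_pos_iff.2 ht0
      rw [inv_mul_le_iff₀ ht0']
      refine this.trans (le_of_eq ?_)
      rw [add_sub_cancel_left, norm_smul]
      field_simp; ring
  · intro y hy
    have hyU : y ∈ U := hsub (ball_subset_ball (by linarith) hy)
    have := ((hd.differentiableAt (hU.mem_nhds hyU)).hasFDerivAt.hasLineDerivAt v).tendsto_slope_zero
    exact this.mono_left hle

theorem sq_contDiff {E F : Type} [NormedAddCommGroup E] [NormedSpace ℂ E]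
    [FiniteDimensional ℂ E] [NormedAddCommGroup F] [NormedSpace ℂ F] [FiniteDimensional ℂ F]
    {f : E → F} {U : Set E} (hU : IsOpen U) (hd : DifferentiableOn ℂ f U) {x : E} (hx : x ∈ U) :
    ContDiffAt ℂ 1 f x := by
  have h : ContDiffOn ℂ 1 f U := by
    rw [show (1 : WithTop ℕ∞) = 0 + 1 from rfl, contDiffOn_succ_iff_fderiv_of_isOpen hU]
    refine ⟨hd, by simp, ?_⟩
    rw [contDiffOn_zero, continuousOn_clm_apply]
    exact fun v => (sq_diff_fderiv hU hd v).continuousOn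
  exact h.contDiffAt (hU.mem_nhds hx)

theorem sq_det_diff {E : Type} [NormedAddCommGroup E] [NormedSpace ℂ E]
    [FiniteDimensional ℂ E] {f : E → E} {U : Set E} (hU : IsOpen U)
    (hd : DifferentiableOn ℂ f U) :
    DifferentiableOn ℂ (fun x => (fderiv ℂ f x).det) U := by
  let b := Module.finBasis ℂ E
  have e : (fun x => (fderiv ℂ f x).det) = fun x => ∑ σ : Equiv.Perm (Fin (Module.finrank ℂ E)),
      (Equiv.Perm.sign σ : ℤ) • ∏ i, (b.coord (σ i)).toContinuousLinearMap (fderiv ℂ f x (b i)) := by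
    funext x
    rw [ContinuousLinearMap.det, ← LinearMap.det_toMatrix b, Matrix.det_apply]
    simp [LinearMap.toMatrix_apply, Units.smul_def]
  rw [e]
  apply DifferentiableOn.fun_sum
  intro σ _
  simp_rw [← Int.cast_smul_eq_zsmul ℂ]
  apply DifferentiableOn.fun_const_smul
  have hi : ∀ i, DifferentiableOn ℂ
      (fun x => (b.coord (σ i)).toContinuousLinearMap (fderiv ℂ f x (b i))) U := fun i =>
    (ContinuousLinearMap.differentiable _).comp_differentiableOn (sq_diff_fderiv hU hd (b i))
  refine Finset.induction_on (Finset.univ : Finset (Fin (Module.finrank ℂ E))) ?_ ?_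
  · simp only [Finset.prod_empty]
    exact differentiableOn_const _
  · intro i s his hs
    simp only [Finset.prod_insert his]
    exact (hi i).mul hs

theorem sq_det_iff {E : Type} [NormedAddCommGroup E] [NormedSpace ℂ E]
    [FiniteDimensional ℂ E] (A : E →L[ℂ] E) : A.det ≠ 0 ↔ Function.Injective A := by
  rw [ContinuousLinearMap.det, ← isUnit_iff_ne_zero, ← LinearMap.isUnit_iff_isUnit_det,
    LinearMap.isUnit_iff_ker_eq_bot, LinearMap.ker_eq_bot]
  rfl

theorem sq_hurwitz1 {ι : Type} (l : Ultrafilter ι) (h : ι → ℂ → ℂ) (g : ℂ → ℂ) {R M : ℝ}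
    (hR : 0 < R)
    (hh : ∀ᶠ i in (l : Filter ι), DifferentiableOn ℂ (h i) (ball 0 R) ∧
      (∀ s ∈ ball 0 R, ‖h i s‖ ≤ M) ∧ ∀ s ∈ ball 0 R, h i s ≠ 0)
    (hg : ∀ s ∈ ball 0 R, Tendsto (fun i => h i s) l (𝓝 (g s)))
    {s1 : ℂ} (hs1 : s1 ∈ ball 0 R) (hne : g s1 ≠ 0) : g 0 ≠ 0 := by
  intro hg0
  have hgd : DifferentiableOn ℂ g (ball 0 R) := by
    intro s hs
    have hs' : 0 < R - ‖s‖ := by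
      rw [mem_ball_zero_iff] at hs; linarith
    have hsub : ball s (R - ‖s‖) ⊆ ball 0 R := by
      apply ball_subset_ball'; simp
    refine ((sq_weier l h g s (R := R - ‖s‖) (M := M) hs' ?_ ?_).1).differentiableWithinAt
    · filter_upwards [hh] with i hi
      exact ⟨hi.1.mono hsub, fun y hy => hi.2.1 y (hsub hy)⟩
    · exact fun y hy => hg y (hsub hy)
  have hga : AnalyticOnNhd ℂ g (ball 0 R) := hgd.analyticOnNhd isOpen_ball
  have h0 : (0 : ℂ) ∈ ball (0 : ℂ) R := mem_ball_self hR
  rcases (hga 0 h0).eventually_eq_zero_or_eventually_ne_zero with hz | hz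
  · exact hne (hga.eqOn_zero_of_preconnected_of_eventuallyEq_zero
      (convex_ball 0 R).isPreconnected h0 hz hs1)
  · rw [eventually_nhdsWithin_iff] at hz
    obtain ⟨ε, hε, hz⟩ := Metric.eventually_nhds_iff_ball.1 hz
    obtain ⟨ρ, hρ0, hρ⟩ := exists_between (lt_min hε hR)
    have hρε := hρ.trans_le (min_le_left _ _)
    have hρR := hρ.trans_le (min_le_right _ _)
    have hsph : ∀ s ∈ sphere (0 : ℂ) ρ, g s ≠ 0 := by
      intro s hs
      refine hz s ?_ (ne_of_mem_sphere hs hρ0.ne')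
      rw [mem_sphere_zero_iff_norm] at hs
      rw [mem_ball_zero_iff]; linarith
    have hsR : closedBall (0 : ℂ) ρ ⊆ ball 0 R := closedBall_subset_ball hρR
    have hcpt := isCompact_sphere (0 : ℂ) ρ
    have hne' : (sphere (0 : ℂ) ρ).Nonempty := NormedSpace.sphere_nonempty.2 hρ0.le
    obtain ⟨s0, hs0, hmin⟩ := hcpt.exists_isMinOn hne'
      (hgd.continuousOn.mono (sphere_subset_closedBall.trans hsR)).norm
    set c := ‖g s0‖ / 2 with hc
    have hcpos : 0 < c := by
      have := norm_pos_iff.2 (hsph s0 hs0); positivity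
    -- eventually |h i| ≥ c on the circle
    have hev : ∀ᶠ i in (l : Filter ι), ∀ s ∈ sphere (0 : ℂ) ρ, c ≤ ‖h i s‖ := by
      by_contra hcon
      rw [← Ultrafilter.eventually_not] at hcon
      have hcon' : ∀ᶠ i in (l : Filter ι), ∃ s, s ∈ sphere (0 : ℂ) ρ ∧ ‖h i s‖ < c := by
        filter_upwards [hcon] with i hi
        push Not at hi
        exact hi
      have : ∃ σ : ι → ℂ, ∀ i, (∃ s, s ∈ sphere (0 : ℂ) ρ ∧ ‖h i s‖ < c) →
          (σ i ∈ sphere (0 : ℂ) ρ ∧ ‖h i (σ i)‖ < c) := by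
        classical
        refine ⟨fun i => if H : ∃ s, s ∈ sphere (0 : ℂ) ρ ∧ ‖h i s‖ < c then H.choose else 0, ?_⟩
        intro i H
        simp only [H, dif_pos]
        exact H.choose_spec
      obtain ⟨σ, hσ⟩ := this
      have hσ' : ∀ᶠ i in (l : Filter ι), σ i ∈ sphere (0 : ℂ) ρ ∧ ‖h i (σ i)‖ < c := by
        filter_upwards [hcon'] with i hi using hσ i hi
      obtain ⟨t, ht, hlt⟩ := hcpt.ultrafilter_le_nhds (l.map σ) (by
        rw [le_principal_iff]
        change ∀ᶠ i in (l : Filter ι), σ i ∈ sphere (0 : ℂ) ρ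
        exact hσ'.mono fun i hi => hi.1)
      have hlt' : Tendsto σ l (𝓝 t) := hlt
      have hRρ : 0 < R - ρ := by linarith
      have hsub : ball t (R - ρ) ⊆ ball 0 R := by
        apply ball_subset_ball'
        rw [mem_sphere] at ht; linarith
      have hnear : ∀ᶠ i in (l : Filter ι), σ i ∈ ball t (R - ρ) :=
        hlt'.eventually (ball_mem_nhds t hRρ)
      have hd0 : Tendsto (fun i => 2 * M / (R - ρ) * ‖σ i - t‖) l (𝓝 0) := by
        have := ((hlt'.sub_const t).norm).const_mul (2 * M / (R - ρ))
        simpa using this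
      have hlim : Tendsto (fun i => h i (σ i) - h i t) l (𝓝 0) := by
        apply squeeze_zero_norm' _ hd0
        filter_upwards [hnear, hh] with i hi hhi
        exact sq_lip (hhi.1.mono hsub) (fun y hy => hhi.2.1 y (hsub hy)) _ hi
      have hlim2 : Tendsto (fun i => h i (σ i)) l (𝓝 (g t)) := by
        have := hlim.add (hg t (hsR (sphere_subset_closedBall ht)))
        simpa using this
      have : ‖g t‖ ≤ c := le_of_tendsto hlim2.norm (hσ'.mono fun i hi => hi.2.le)
      have h2 : ‖g s0‖ ≤ ‖g t‖ := hmin ht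
      linarith
    -- maximum principle for 1 / h i
    have hbig : ∀ᶠ i in (l : Filter ι), c ≤ ‖h i 0‖ := by
      filter_upwards [hev, hh] with i hi hhi
      have hinv : DifferentiableOn ℂ (fun s => (h i s)⁻¹) (closedBall 0 ρ) :=
        (hhi.1.mono hsR).inv fun s hs => hhi.2.2 s (hsR hs)
      have := Complex.norm_le_of_forall_mem_frontier_norm_le (U := ball (0 : ℂ) ρ) (C := c⁻¹)
        isBounded_ball (hinv.diffContOnCl_ball subset_rfl) (fun s hs => ?_)
        (subset_closure (mem_ball_self hρ0))
      · rw [norm_inv] at this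
        exact (inv_le_inv₀ (norm_pos_iff.2 (hhi.2.2 0 h0)) hcpos).1 this
      · rw [norm_inv]
        exact inv_anti₀ hcpos (hi s (frontier_ball_subset_sphere hs))
    have := ge_of_tendsto (hg 0 h0).norm hbig
    rw [hg0, norm_zero] at this
    linarith

open Filter Topology

theorem sq_inj1 {f : ℂ → ℂ} {U : Set ℂ} (hU : IsOpen U) (hd : DifferentiableOn ℂ f U)
    (hinj : InjOn f U) {a : ℂ} (ha : a ∈ U) : deriv f a ≠ 0 := by
  wlog ha0 : a = 0 generalizing f U a
  · have hU' : IsOpen ((fun s => s + a) ⁻¹' U) := hU.preimage (by fun_prop)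
    have := this (f := fun s => f (s + a)) hU'
      (hd.comp (by fun_prop) (fun s hs => hs)) (fun x hx y hy hxy => by
        simpa using hinj hx hy hxy) (a := 0) (by simpa using ha) rfl
    rw [deriv_comp_add_const] at this
    simpa using this
  subst ha0
  intro hf0
  obtain ⟨R0, hR0, M, hsub, hM⟩ := sq_bdd hU hd ha
  have hdA : DifferentiableOn ℂ f (ball 0 R0) := hd.mono hsub
  have hda : AnalyticAt ℂ f 0 := hd.analyticAt (hU.mem_nhds ha)
  have hne : ∀ᶠ t in 𝓝[≠] (0 : ℂ), deriv f t ≠ 0 := by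
    rcases hda.deriv.eventually_eq_zero_or_eventually_ne_zero with h | h
    · exfalso
      obtain ⟨r, hr, h⟩ := Metric.eventually_nhds_iff_ball.1 h
      have hr' : 0 < min r R0 := lt_min hr hR0
      have hc : ∀ x ∈ ball (0 : ℂ) (min r R0), f x = f 0 := by
        intro x hx
        apply (convex_ball (0 : ℂ) (min r R0)).is_const_of_fderivWithin_eq_zero (𝕜 := ℂ)
          (hdA.mono (ball_subset_ball (min_le_right _ _))) _ hx (mem_ball_self hr')
        intro y hy
        rw [fderivWithin_of_isOpen isOpen_ball hy]
        ext
        simpa using h y (ball_subset_ball (min_le_left _ _) hy)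
      have hx : ((min r R0 / 2 : ℝ) : ℂ) ∈ ball (0 : ℂ) (min r R0) := by
        rw [mem_ball_zero_iff, Complex.norm_real, Real.norm_of_nonneg (by positivity)]
        linarith
      have := hinj (hsub (ball_subset_ball (min_le_right _ _) hx)) ha (hc _ hx)
      have h2 : min r R0 / 2 = 0 := by exact_mod_cast this
      linarith
    · exact h
  have hR : 0 < R0 / 2 := by positivity
  set R := R0 / 2 with hRdef
  have hRR : R0 = 2 * R := by rw [hRdef]; ring
  have hle := Ultrafilter.of_le (𝓝[≠] (0 : ℂ))
  have hne0 : ∀ᶠ t in 𝓝[≠] (0 : ℂ), t ≠ 0 := eventually_mem_nhdsWithin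
  have hR2 : ∀ᶠ t in 𝓝[≠] (0 : ℂ), t ∈ ball (0 : ℂ) R :=
    nhdsWithin_le_nhds (ball_mem_nhds _ hR)
  have hs1 : ((R / 2 : ℝ) : ℂ) ∈ ball (0 : ℂ) R := by
    rw [mem_ball_zero_iff, Complex.norm_real, Real.norm_of_nonneg (by positivity)]
    linarith
  have hs10 : ((R / 2 : ℝ) : ℂ) ≠ 0 := by
    exact_mod_cast (by positivity : R / 2 ≠ 0)
  have hBU : ball (0 : ℂ) R ⊆ ball 0 R0 := ball_subset_ball (by linarith)
  refine sq_hurwitz1 (Ultrafilter.of (𝓝[≠] (0 : ℂ))) (fun t => dslope f t) (dslope f 0)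
    (R := R) (M := 2 * (2 * M) / R) hR ?_ ?_ hs1 ?_ ?_
  · filter_upwards [hle hne, hle hne0, hle hR2] with t ht1 ht0 htR
    refine ⟨(Complex.differentiableOn_dslope (isOpen_ball.mem_nhds htR)).2 (hdA.mono hBU),
      fun s hs => ?_, fun s hs => ?_⟩
    · have hst : ball t R ⊆ ball 0 R0 := by
        apply ball_subset_ball'
        have : dist t 0 < R := htR
        linarith
      have hM0 : 0 ≤ M := (norm_nonneg _).trans (hM 0 (mem_ball_self hR0))
      by_cases hsR : s ∈ ball t R
      · have hmaps : MapsTo f (ball t R) (closedBall (f t) (2 * M)) := by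
          intro y hy
          rw [mem_closedBall, dist_eq_norm]
          have := norm_sub_le (f y) (f t)
          linarith [hM y (hst hy), hM t (hBU htR)]
        refine (Complex.norm_dslope_le_div_of_mapsTo_ball (hdA.mono hst) hmaps hsR).trans ?_
        gcongr; linarith
      · have hRs : R ≤ ‖s - t‖ := by
          rw [mem_ball, dist_eq_norm] at hsR; linarith
        have hst' : s ≠ t := by
          rintro rfl; simp at hRs; linarith
        rw [dslope_of_ne _ hst', slope_def_module, norm_smul, norm_inv,
          inv_mul_le_iff₀ (by linarith)]
        have h1 : ‖f s - f t‖ ≤ 2 * M := by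
          have := norm_sub_le (f s) (f t)
          linarith [hM s (hBU hs), hM t (hBU htR)]
        calc ‖f s - f t‖ ≤ 2 * M := h1
          _ ≤ R * (2 * (2 * M) / R) := by field_simp; linarith
          _ ≤ _ := by gcongr
    · by_cases hst : s = t
      · rw [hst, dslope_same]; exact ht1
      · rw [dslope_of_ne _ hst, slope_def_module]
        refine smul_ne_zero (inv_ne_zero (sub_ne_zero.2 hst)) (sub_ne_zero.2 fun h => hst ?_)
        exact hinj (hsub (hBU hs)) (hsub (hBU htR)) h
  · intro s hs
    refine Tendsto.mono_left ?_ hle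
    by_cases hs0 : s = 0
    · subst hs0
      have h1 : ContinuousAt (dslope f 0) 0 := continuousAt_dslope_same.2 hda.differentiableAt
      refine (h1.tendsto.mono_left nhdsWithin_le_nhds).congr' ?_
      filter_upwards [hne0] with t ht
      rw [dslope_of_ne _ ht, dslope_of_ne _ ht.symm, slope_comm]
    · have h1 : Tendsto (fun t => (s - t)⁻¹ • (f s - f t)) (𝓝[≠] 0) (𝓝 ((s - 0)⁻¹ • (f s - f 0))) := by
        refine Tendsto.mono_left ?_ nhdsWithin_le_nhds
        have h2 : ContinuousAt (fun t => (s - t)⁻¹ • (f s - f t)) 0 := by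
          refine ContinuousAt.smul (f := fun t => (s - t)⁻¹) (g := fun t => f s - f t) ?_ ?_
          · apply ContinuousAt.inv₀
            · fun_prop
            · simpa using hs0
          · exact continuousAt_const.sub hda.continuousAt
        exact h2
      rw [dslope_of_ne _ hs0, slope_def_module]
      refine h1.congr' ?_
      have : ∀ᶠ t in 𝓝[≠] (0 : ℂ), t ≠ s :=
        nhdsWithin_le_nhds (isOpen_ne.mem_nhds (Ne.symm hs0))
      filter_upwards [this] with t ht
      rw [dslope_of_ne _ ht.symm, slope_def_module]
  · rw [dslope_of_ne _ hs10, slope_def_module]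
    refine smul_ne_zero (inv_ne_zero (sub_ne_zero.2 hs10)) (sub_ne_zero.2 fun h => hs10 ?_)
    exact hinj (hsub (hBU hs1)) ha h
  · rw [dslope_same]; exact hf0

theorem sq_straighten {E : Type} [NormedAddCommGroup E] [NormedSpace ℂ E]
    [FiniteDimensional ℂ E] {φ : E → ℂ} {U : Set E} (hU : IsOpen U)
    (hd : DifferentiableOn ℂ φ U) {p : E} (hp : p ∈ U) (e : E) (he : fderiv ℂ φ p e ≠ 0)
    (K : Submodule ℂ E) (hK : K = LinearMap.ker (fderiv ℂ φ p).toLinearMap) :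
    ∃ ψ : K → E, ψ 0 = p ∧ HasFDerivAt ψ K.subtypeL 0 ∧
      (∀ᶠ w in 𝓝 (0 : K), φ (ψ w) = φ p ∧ DifferentiableAt ℂ ψ w ∧
        ∃ s : ℂ, ψ w = p + w + s • e) ∧
      (∀ᶠ x in 𝓝 p, ∀ (w : K) (s : ℂ), x = p + w + s • e → φ x = φ p → x = ψ w) := by
  subst hK
  set A := fderiv ℂ φ p with hA
  set K := LinearMap.ker A.toLinearMap with hKdef
  have hKA : ∀ w : K, A (w : E) = 0 := fun w => w.2
  -- the projection along `e`
  let π0 : E →L[ℂ] E := ContinuousLinearMap.id ℂ E - (A.smulRight ((A e)⁻¹ • e))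
  have hπ0 : ∀ x, π0 x = x - (A x) • (A e)⁻¹ • e := fun x => rfl
  have hπK : ∀ x, π0 x ∈ K := by
    intro x
    change A (π0 x) = 0
    rw [hπ0]
    simp [he]
  let π : E →L[ℂ] K := π0.codRestrict K hπK
  have hπc : ∀ x, ((π x : K) : E) = x - (A x) • (A e)⁻¹ • e := fun x => rfl
  have hπe : ∀ (w : K) (s : ℂ), π (w + s • e) = w := by
    intro w s
    apply Subtype.ext
    rw [hπc, map_add, map_smul, hKA w]
    simp [smul_smul, he]
  let L : E ≃L[ℂ] ℂ × K := ContinuousLinearEquiv.equivOfInverse (A.prod π)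
    ((ContinuousLinearMap.fst ℂ ℂ K).smulRight ((A e)⁻¹ • e) +
      K.subtypeL.comp (ContinuousLinearMap.snd ℂ ℂ K))
    (by intro x; simp [hπc])
    (by
      rintro ⟨c, w⟩
      have h1 := hπe w (c * (A e)⁻¹)
      rw [add_comm] at h1
      have h2 := hKA w
      simp [he, h2, ← smul_smul] at h1 ⊢
      exact h1)
  let Φ : E → ℂ × K := fun x => (φ x - φ p, π (x - p))
  have hΦd : DifferentiableOn ℂ Φ U := by
    apply DifferentiableOn.prodMk
    · exact hd.sub_const _
    · exact (π.differentiable.comp (differentiable_id.sub_const p)).differentiableOn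
  have hΦ1 : ContDiffAt ℂ 1 Φ p := sq_contDiff hU hΦd hp
  have hΦ' : HasFDerivAt Φ (L : E →L[ℂ] ℂ × K) p := by
    have h1 : HasFDerivAt (fun x => φ x - φ p) A p :=
      (hd.differentiableAt (hU.mem_nhds hp)).hasFDerivAt.sub_const _
    have h2 : HasFDerivAt (fun x => π (x - p)) π p := by
      have h3 := π.hasFDerivAt.comp p ((hasFDerivAt_id p).sub_const p)
      rw [ContinuousLinearMap.comp_id] at h3
      exact h3
    exact h1.prodMk h2
  have hst : HasStrictFDerivAt Φ (L : E →L[ℂ] ℂ × K) p := hΦ1.hasStrictFDerivAt' hΦ' one_ne_zero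
  have hΦp : Φ p = 0 := by simp [Φ]
  let Ψ := hst.localInverse Φ L p
  have hΨ0 : Ψ 0 = p := by rw [← hΦp]; exact hst.localInverse_apply_image
  have hΨ1 : ContDiffAt ℂ 1 Ψ 0 := by
    rw [← hΦp]; exact hΦ1.to_localInverse hΦ' one_ne_zero
  have hΨs : HasStrictFDerivAt Ψ (L.symm : ℂ × K →L[ℂ] E) 0 := by
    rw [← hΦp]; exact hst.to_localInverse
  have hl : ∀ᶠ x in 𝓝 p, Ψ (Φ x) = x := hst.eventually_left_inverse
  have hr : ∀ᶠ y in 𝓝 (0 : ℂ × K), Φ (Ψ y) = y := by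
    rw [← hΦp]; exact hst.eventually_right_inverse
  have hΨd : ∀ᶠ y in 𝓝 (0 : ℂ × K), DifferentiableAt ℂ Ψ y := by
    have := hΨ1.eventually (by simp)
    exact this.mono fun y hy => hy.differentiableAt one_ne_zero
  have hinr : Tendsto (fun w : K => ((0 : ℂ), w)) (𝓝 0) (𝓝 0) := by
    have : Continuous (fun w : K => ((0 : ℂ), w)) := by fun_prop
    exact this.tendsto 0
  refine ⟨fun w => Ψ (0, w), hΨ0, ?_, ?_, ?_⟩
  · have h1 : HasFDerivAt (fun w : K => ((0 : ℂ), w)) (ContinuousLinearMap.inr ℂ ℂ K) 0 :=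
      (ContinuousLinearMap.inr ℂ ℂ K).hasFDerivAt
    have h2 := HasFDerivAt.comp (0 : K) (g := Ψ) hΨs.hasFDerivAt h1
    have h3 : (L.symm : ℂ × K →L[ℂ] E).comp (ContinuousLinearMap.inr ℂ ℂ K) = K.subtypeL := by
      ext w
      change (0 : ℂ) • ((A e)⁻¹ • e) + (w : E) = w
      simp
    rw [h3] at h2
    exact h2
  · filter_upwards [hinr.eventually hr, hinr.eventually hΨd] with w hw1 hw2
    have e1 : φ (Ψ (0, w)) - φ p = 0 := congrArg Prod.fst hw1
    have e2 : π (Ψ (0, w) - p) = w := congrArg Prod.snd hw1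
    refine ⟨sub_eq_zero.1 e1, ?_, ?_⟩
    · exact DifferentiableAt.comp w (g := Ψ) hw2 (by fun_prop)
    · refine ⟨A (Ψ (0, w) - p) * (A e)⁻¹, ?_⟩
      have e3 := hπc (Ψ (0, w) - p)
      rw [e2] at e3
      rw [e3, ← smul_smul]
      abel
  · filter_upwards [hl] with x hx w s hxw hφ
    have : Φ x = (0, w) := by
      have h5 : x - p = w + s • e := by rw [hxw]; abel
      simp only [Φ, hφ, sub_self, h5, hπe]
    rw [← this]; exact hx.symm

open Filter Topology

theorem sq_line_iff {E : Type} [NormedAddCommGroup E] [NormedSpace ℂ E]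
    [FiniteDimensional ℂ E] {h : E → ℂ} {U : Set E} (hU : IsOpen U)
    (hd : DifferentiableOn ℂ h U) (e : E) (D : (E → ℂ) → E → ℂ)
    (hD : ∀ u x, D u x = fderiv ℂ u x e) :
    (∀ k, DifferentiableOn ℂ (D^[k] h) U) ∧
    ∀ p ∈ U, ((∀ k, D^[k] h p = 0) ↔ ∀ᶠ s in 𝓝 (0 : ℂ), h (p + s • e) = 0) := by
  have hdk : ∀ k, DifferentiableOn ℂ (D^[k] h) U := by
    intro k
    induction k with
    | zero => exact hd
    | succ k ih =>
      rw [Function.iterate_succ_apply']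
      have : D (D^[k] h) = fun x => fderiv ℂ (D^[k] h) x e := funext fun x => hD _ x
      rw [this]
      exact sq_diff_fderiv hU ih e
  refine ⟨hdk, fun p hp => ?_⟩
  have hcont : Continuous fun s : ℂ => p + s • e := by fun_prop
  have hit : ∀ k, ∀ s : ℂ, p + s • e ∈ U →
      iteratedDeriv k (fun s => h (p + s • e)) s = D^[k] h (p + s • e) := by
    intro k
    induction k with
    | zero => intro s _; simp
    | succ k ih =>
      intro s hs
      rw [iteratedDeriv_succ, Function.iterate_succ_apply', hD]
      have hev : iteratedDeriv k (fun s => h (p + s • e)) =ᶠ[𝓝 s] fun s => D^[k] h (p + s • e) := by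
        filter_upwards [hcont.continuousAt.preimage_mem_nhds (hU.mem_nhds hs)] with t ht
        exact ih t ht
      rw [hev.deriv_eq]
      have h1 : HasFDerivAt (D^[k] h) (fderiv ℂ (D^[k] h) (p + s • e)) (p + s • e) :=
        ((hdk k).differentiableAt (hU.mem_nhds hs)).hasFDerivAt
      have h2 : HasDerivAt (fun s : ℂ => p + s • e) e s := by
        simpa using ((hasDerivAt_id s).smul_const e).const_add p
      exact (h1.comp_hasDerivAt s h2).deriv
  have hV : IsOpen ((fun s : ℂ => p + s • e) ⁻¹' U) := hU.preimage hcont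
  have h0 : (0 : ℂ) ∈ (fun s : ℂ => p + s • e) ⁻¹' U := by simpa using hp
  have hga : AnalyticAt ℂ (fun s : ℂ => h (p + s • e)) 0 := by
    have : DifferentiableOn ℂ (fun s : ℂ => h (p + s • e)) ((fun s : ℂ => p + s • e) ⁻¹' U) :=
      hd.comp (by fun_prop) (fun s hs => hs)
    exact this.analyticAt (hV.mem_nhds h0)
  have hit0 : ∀ k, iteratedDeriv k (fun s : ℂ => h (p + s • e)) 0 = D^[k] h p := by
    intro k
    have := hit k 0 h0
    simpa using this
  rw [← analyticOrderAt_eq_top, ENat.eq_top_iff_forall_ge]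
  simp only [natCast_le_analyticOrderAt_iff_iteratedDeriv_eq_zero hga, hit0]
  exact ⟨fun H m i _ => H i, fun H k => H (k + 1) k (Nat.lt_succ_self k)⟩

/-- induction step, first part: nonzero derivative -/
theorem sq_osgoodA {E : Type} [NormedAddCommGroup E] [NormedSpace ℂ E]
    [FiniteDimensional ℂ E] {n : ℕ} (hn : Module.finrank ℂ E = n + 1)
    (IH : ∀ (E : Type) [NormedAddCommGroup E] [NormedSpace ℂ E] [FiniteDimensional ℂ E],
      Module.finrank ℂ E = n → ∀ (f : E → E) (U : Set E), IsOpen U → DifferentiableOn ℂ f U →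
      InjOn f U → ∀ a ∈ U, Function.Injective (fderiv ℂ f a))
    {f : E → E} {U : Set E} (hU : IsOpen U) (hd : DifferentiableOn ℂ f U) (hinj : InjOn f U)
    {a : E} (ha : a ∈ U) (hne : fderiv ℂ f a ≠ 0) : Function.Injective (fderiv ℂ f a) := by
  obtain ⟨e, he⟩ : ∃ e, fderiv ℂ f a e ≠ 0 := by
    by_contra hcon
    push Not at hcon
    exact hne (ContinuousLinearMap.ext hcon)
  obtain ⟨lam, -, hlam⟩ := exists_dual_vector ℂ (fderiv ℂ f a e) (norm_ne_zero_iff.2 he)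
  have hlam' : lam (fderiv ℂ f a e) ≠ 0 := by
    rw [hlam]; simpa using he
  have hda : HasFDerivAt f (fderiv ℂ f a) a := (hd.differentiableAt (hU.mem_nhds ha)).hasFDerivAt
  have hφd : DifferentiableOn ℂ (fun x => lam (f x)) U :=
    lam.differentiable.comp_differentiableOn hd
  have hφ' : fderiv ℂ (fun x => lam (f x)) a = lam.comp (fderiv ℂ f a) :=
    (lam.hasFDerivAt.comp a hda).fderiv
  set K := LinearMap.ker (lam.comp (fderiv ℂ f a)).toLinearMap with hK
  obtain ⟨ψ, hψ0, hψ', hψ1, -⟩ := sq_straighten hU hφd ha e (by rw [hφ']; exact hlam') K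
    (by rw [hφ'])
  set N := LinearMap.ker lam.toLinearMap with hN
  -- projection onto N
  set e' := fderiv ℂ f a e with he'
  let P0 : E →L[ℂ] E := ContinuousLinearMap.id ℂ E - (lam.smulRight ((lam e')⁻¹ • e'))
  have hP0 : ∀ x, P0 x = x - (lam x) • (lam e')⁻¹ • e' := fun x => rfl
  let P : E →L[ℂ] N := P0.codRestrict N (by
    intro x
    change lam (P0 x) = 0
    rw [hP0]; simp [hlam'])
  have hP : ∀ x, lam x = 0 → ((P x : N) : E) = x := by
    intro x hx
    change P0 x = x
    rw [hP0, hx]; simp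
  have hKn : Module.finrank ℂ K = n := by
    have h1 := LinearMap.finrank_range_add_finrank_ker (lam.comp (fderiv ℂ f a)).toLinearMap
    have h2 : LinearMap.range (lam.comp (fderiv ℂ f a)).toLinearMap = ⊤ :=
      LinearMap.range_eq_top.2 (LinearMap.surjective (fun h => hlam' (LinearMap.congr_fun h e)))
    rw [h2, finrank_top, Module.finrank_self, hn] at h1
    change 1 + Module.finrank ℂ K = n + 1 at h1
    omega
  have hNn : Module.finrank ℂ N = n := by
    have h1 := LinearMap.finrank_range_add_finrank_ker lam.toLinearMap
    have h2 : LinearMap.range lam.toLinearMap = ⊤ :=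
      LinearMap.range_eq_top.2 (LinearMap.surjective (fun h => hlam' (LinearMap.congr_fun h e')))
    rw [h2, finrank_top, Module.finrank_self, hn] at h1
    change 1 + Module.finrank ℂ N = n + 1 at h1
    omega
  let J : N ≃L[ℂ] K := ContinuousLinearEquiv.ofFinrankEq (hNn.trans hKn.symm)
  let F : K → K := fun w => J (P (f (ψ w) - f a))
  have hψc : ContinuousAt ψ 0 := hψ'.continuousAt
  have hψU : ∀ᶠ w in 𝓝 (0 : K), ψ w ∈ U := hψc.eventually (by rw [hψ0]; exact hU.mem_nhds ha)
  obtain ⟨r, hr, hball⟩ := Metric.eventually_nhds_iff_ball.1 (hψ1.and hψU)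
  have hFd : DifferentiableOn ℂ F (ball 0 r) := by
    intro w hw
    obtain ⟨⟨-, h2, -⟩, h3⟩ := hball w hw
    have h4 : DifferentiableAt ℂ (fun w => f (ψ w) - f a) w :=
      (DifferentiableAt.comp w (hd.differentiableAt (hU.mem_nhds h3)) h2).sub_const _
    have h5 : DifferentiableAt ℂ (fun w => J (P (f (ψ w) - f a))) w :=
      J.differentiable.differentiableAt.comp w (P.differentiable.differentiableAt.comp w h4)
    exact h5.differentiableWithinAt
  have hlam0 : ∀ w ∈ ball (0 : K) r, lam (f (ψ w) - f a) = 0 := by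
    intro w hw
    rw [map_sub, (hball w hw).1.1, sub_self]
  have hFinj : InjOn F (ball 0 r) := by
    intro w hw w' hw' hFF
    have h1 : P (f (ψ w) - f a) = P (f (ψ w') - f a) := J.injective hFF
    have h2 := congrArg (Subtype.val) h1
    rw [hP _ (hlam0 w hw), hP _ (hlam0 w' hw')] at h2
    have h3 : ψ w = ψ w' := hinj (hball w hw).2 (hball w' hw').2 (sub_left_injective h2)
    obtain ⟨s, hs⟩ := (hball w hw).1.2.2
    obtain ⟨s', hs'⟩ := (hball w' hw').1.2.2
    rw [hs, hs'] at h3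
    have h4 : (w : E) + s • e = w' + s' • e := by
      have := h3
      rw [add_assoc, add_assoc] at this
      exact add_left_cancel this
    have hw0 : lam (fderiv ℂ f a w) = 0 := w.2
    have hw0' : lam (fderiv ℂ f a w') = 0 := w'.2
    have h5 := congrArg (fun x => lam (fderiv ℂ f a x)) h4
    simp only [map_add, map_smul, hw0, hw0', zero_add, smul_eq_mul] at h5
    have h6 : s = s' := mul_right_cancel₀ hlam' h5
    rw [h6] at h4
    exact Subtype.ext (add_right_cancel h4)
  have hinjF := IH K hKn F (ball 0 r) isOpen_ball hFd hFinj 0 (mem_ball_self hr)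
  have hF' : HasFDerivAt F ((J : N →L[ℂ] K).comp (P.comp ((fderiv ℂ f a).comp K.subtypeL))) 0 := by
    have h1 : HasFDerivAt (fun w => f (ψ w)) ((fderiv ℂ f a).comp K.subtypeL) 0 := by
      apply HasFDerivAt.comp
      · rw [hψ0]; exact hda
      · exact hψ'
    have h2 := h1.sub_const (f a)
    exact (J : N →L[ℂ] K).hasFDerivAt.comp 0 (P.hasFDerivAt.comp 0 h2)
  rw [hF'.fderiv] at hinjF
  rw [injective_iff_map_eq_zero]
  intro v hv
  have hvK : v ∈ K := by
    change lam (fderiv ℂ f a v) = 0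
    rw [hv, map_zero]
  have := (injective_iff_map_eq_zero _).1 hinjF ⟨v, hvK⟩ (by
    change J (P (fderiv ℂ f a v)) = 0
    rw [hv, map_zero, map_zero])
  exact congrArg Subtype.val this

open Filter Topology

theorem sq_const {E F : Type} [NormedAddCommGroup E] [NormedSpace ℂ E] [NormedAddCommGroup F]
    [NormedSpace ℂ F] {f : E → F} {a : E} (h : ∀ᶠ x in 𝓝 a, DifferentiableAt ℂ f x ∧
    fderiv ℂ f x = 0) : ∀ᶠ x in 𝓝 a, f x = f a := by
  obtain ⟨r, hr, h⟩ := Metric.eventually_nhds_iff_ball.1 h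
  filter_upwards [ball_mem_nhds a hr] with x hx
  apply (convex_ball a r).is_const_of_fderivWithin_eq_zero (𝕜 := ℂ)
    (fun y hy => (h y hy).1.differentiableWithinAt) _ hx (mem_ball_self hr)
  intro y hy
  rw [fderivWithin_of_isOpen isOpen_ball hy]
  exact (h y hy).2

theorem sq_not_ev_eq {E : Type} [NormedAddCommGroup E] [NormedSpace ℂ E] [Nontrivial E]
    (a : E) (h : ∀ᶠ x in 𝓝 a, x = a) : False := by
  obtain ⟨r, hr, h⟩ := Metric.eventually_nhds_iff_ball.1 h
  obtain ⟨v, hv⟩ := exists_ne (0 : E)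
  have hv' : 0 < ‖v‖ := norm_pos_iff.2 hv
  have h1 := h (a + ((r / 2 / ‖v‖ : ℝ) : ℂ) • v) (by
    rw [mem_ball, dist_eq_norm, add_sub_cancel_left, norm_smul, Complex.norm_real,
      Real.norm_of_nonneg (by positivity)]
    field_simp; linarith)
  rw [add_eq_left] at h1
  have h2 : r / 2 / ‖v‖ ≠ 0 := by positivity
  exact (smul_ne_zero (by exact_mod_cast h2) hv) h1

/-- induction step, second part -/
theorem sq_osgoodB {E : Type} [NormedAddCommGroup E] [NormedSpace ℂ E]
    [FiniteDimensional ℂ E] {n : ℕ} (hn : Module.finrank ℂ E = n + 2)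
    {f : E → E} {U : Set E} (hU : IsOpen U) (hd : DifferentiableOn ℂ f U) (hinj : InjOn f U)
    (hA : ∀ x ∈ U, fderiv ℂ f x ≠ 0 → Function.Injective (fderiv ℂ f x))
    {a : E} (ha : a ∈ U) (ha0 : fderiv ℂ f a = 0) : False := by
  have : Nontrivial E := Module.nontrivial_of_finrank_pos (R := ℂ) (by omega)
  set h : E → ℂ := fun x => (fderiv ℂ f x).det with hdef
  have hh : DifferentiableOn ℂ h U := sq_det_diff hU hd
  have hhz : ∀ x ∈ U, h x = 0 → fderiv ℂ f x = 0 := by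
    intro x hx hx0
    by_contra hne
    exact (sq_det_iff _).2 (hA x hx hne) hx0
  have hh0 : ∀ x, fderiv ℂ f x = 0 → h x = 0 := by
    intro x hx
    by_contra hne
    have := (sq_det_iff _).1 hne
    rw [hx] at this
    obtain ⟨v, hv⟩ := exists_ne (0 : E)
    exact hv (this (by simp))
  -- a direction in which h is not identically zero
  obtain ⟨R, hR, hRU⟩ := Metric.isOpen_iff.1 hU a ha
  obtain ⟨y, hyR, hy⟩ : ∃ y ∈ ball a R, h y ≠ 0 := by
    by_contra hcon
    push Not at hcon
    have h1 : ∀ᶠ x in 𝓝 a, f x = f a := by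
      apply sq_const
      filter_upwards [ball_mem_nhds a hR] with x hx
      exact ⟨hd.differentiableAt (hU.mem_nhds (hRU hx)), hhz x (hRU hx) (hcon x hx)⟩
    apply sq_not_ev_eq a
    filter_upwards [h1, hU.mem_nhds ha] with x hx hxU
    exact hinj hxU ha hx
  set e := y - a with he
  have he0 : e ≠ 0 := by
    intro h0
    rw [he, sub_eq_zero] at h0
    exact hy (h0 ▸ hh0 a ha0)
  have hepos : 0 < ‖e‖ := norm_pos_iff.2 he0
  let D : (E → ℂ) → E → ℂ := fun u x => fderiv ℂ u x e
  obtain ⟨hDd, hDiff⟩ := sq_line_iff hU hh e D (fun _ _ => rfl)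
  have hex : ∃ k, ∃ p ∈ U, h p = 0 ∧ D^[k] h p ≠ 0 := by
    by_contra hcon
    push Not at hcon
    have h1 := (hDiff a ha).1 (fun k => hcon k a ha (hh0 a ha0))
    have hmaps : MapsTo (fun s : ℂ => a + s • e) (ball 0 (R / ‖e‖)) (ball a R) := by
      intro s hs
      rw [mem_ball_zero_iff, lt_div_iff₀ hepos] at hs
      rw [mem_ball, dist_eq_norm, add_sub_cancel_left, norm_smul]
      exact hs
    have h2 : DifferentiableOn ℂ (fun s : ℂ => h (a + s • e)) (ball 0 (R / ‖e‖)) :=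
      (hh.mono hRU).comp (by fun_prop) hmaps
    have h3 := (h2.analyticOnNhd isOpen_ball).eqOn_zero_of_preconnected_of_eventuallyEq_zero
      (convex_ball 0 _).isPreconnected (mem_ball_self (by positivity)) h1
    have h4 : (1 : ℂ) ∈ ball (0 : ℂ) (R / ‖e‖) := by
      rw [mem_ball_zero_iff, norm_one, lt_div_iff₀ hepos, one_mul]
      rwa [mem_ball, dist_eq_norm] at hyR
    have h5 := h3 h4
    simp only [one_smul, he, add_sub_cancel] at h5
    exact hy h5
  classical
  obtain ⟨p, hpU, hp0, hpk⟩ := Nat.find_spec hex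
  have hmin := fun m hm => Nat.find_min hex (m := m) hm
  generalize Nat.find hex = k at hpk hmin
  rcases k with _ | k
  · exact hpk hp0
  set φ := D^[k] h with hφ
  have hφZ : ∀ x ∈ U, h x = 0 → φ x = 0 := by
    intro x hx hx0
    by_contra hne
    exact hmin k (Nat.lt_succ_self k) ⟨x, hx, hx0, hne⟩
  have hφe : fderiv ℂ φ p e ≠ 0 := by
    rw [Function.iterate_succ_apply'] at hpk
    exact hpk
  set K := LinearMap.ker (fderiv ℂ φ p).toLinearMap with hK
  obtain ⟨ψ, hψ0, hψ', hψ1, hψ2⟩ := sq_straighten hU (hDd k) hpU e hφe K rfl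
  have hKn : Module.finrank ℂ K = n + 1 := by
    have h1 := LinearMap.finrank_range_add_finrank_ker (fderiv ℂ φ p).toLinearMap
    have h2 : LinearMap.range (fderiv ℂ φ p).toLinearMap = ⊤ :=
      LinearMap.range_eq_top.2 (LinearMap.surjective (fun h => hφe (LinearMap.congr_fun h e)))
    rw [h2, finrank_top, Module.finrank_self, hn] at h1
    change 1 + Module.finrank ℂ K = n + 2 at h1
    omega
  have hKnt : Nontrivial K := Module.nontrivial_of_finrank_pos (R := ℂ) (by omega)
  have hφp : φ p = 0 := hφZ p hpU hp0
  -- h vanishes along ψ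
  have hψc : ContinuousAt ψ 0 := hψ'.continuousAt
  have hψU : ∀ᶠ w in 𝓝 (0 : K), ψ w ∈ U := hψc.eventually (by rw [hψ0]; exact hU.mem_nhds hpU)
  have hψZ : ∀ᶠ w in 𝓝 (0 : K), h (ψ w) = 0 := by
    by_contra hcon
    have hfr : ∃ᶠ w in 𝓝 (0 : K), h (ψ w) ≠ 0 := Filter.not_eventually.1 hcon
    have hneb : NeBot (𝓝 (0 : K) ⊓ 𝓟 {w | h (ψ w) ≠ 0}) := frequently_iff_neBot.1 hfr
    have hle := Ultrafilter.of_le (𝓝 (0 : K) ⊓ 𝓟 {w | h (ψ w) ≠ 0})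
    set l := Ultrafilter.of (𝓝 (0 : K) ⊓ 𝓟 {w | h (ψ w) ≠ 0})
    have hl1 : (l : Filter K) ≤ 𝓝 0 := hle.trans inf_le_left
    have hl2 : ∀ᶠ w in (l : Filter K), h (ψ w) ≠ 0 :=
      (hle.trans inf_le_right) (mem_principal_self _)
    obtain ⟨r1, hr1, M, hr1U, hM⟩ := sq_bdd hU hh hpU
    obtain ⟨r2, hr2, hψ2⟩ := Metric.eventually_nhds_iff_ball.1 hψ2
    set ρ := min r1 r2 / 2 with hρ
    have hρ0 : 0 < ρ := by
      have := lt_min hr1 hr2; positivity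
    have hρ1 : 2 * ρ ≤ r1 := by rw [hρ]; linarith [min_le_left r1 r2]
    have hρ2 : 2 * ρ ≤ r2 := by rw [hρ]; linarith [min_le_right r1 r2]
    have hin : ∀ w : K, ‖w‖ < ρ → ∀ s ∈ ball (0 : ℂ) (ρ / ‖e‖),
        p + w + s • e ∈ ball p (2 * ρ) := by
      intro w hw s hs
      rw [mem_ball_zero_iff, lt_div_iff₀ hepos] at hs
      have e1 : p + w + s • e - p = w + s • e := by abel
      rw [mem_ball, dist_eq_norm, e1]
      have h1 := norm_add_le (w : E) (s • e)
      rw [norm_smul] at h1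
      have : ‖(w : E)‖ = ‖w‖ := rfl
      linarith
    have hlρ : ∀ᶠ w in (l : Filter K), ‖w‖ < ρ := by
      have := hl1 (ball_mem_nhds (0 : K) hρ0)
      filter_upwards [this] with w hw
      simpa using hw
    -- some point on the line through p where h ≠ 0
    have hnz : ∃ s1 ∈ ball (0 : ℂ) (ρ / ‖e‖), h (p + s1 • e) ≠ 0 := by
      by_contra hcon2
      push Not at hcon2
      refine hpk ((hDiff p hpU).2 ?_ (k + 1))
      filter_upwards [ball_mem_nhds (0 : ℂ) (show 0 < ρ / ‖e‖ by positivity)] with s hs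
      exact hcon2 s hs
    obtain ⟨s1, hs1, hs1ne⟩ := hnz
    have := sq_hurwitz1 l (fun w s => h (p + w + s • e)) (fun s => h (p + s • e))
      (R := ρ / ‖e‖) (M := M) (by positivity) ?_ ?_ hs1 hs1ne
    · simp only [zero_smul, add_zero] at this
      exact this hp0
    · filter_upwards [hlρ, hl2] with w hw hw2
      refine ⟨?_, fun s hs => hM _ (ball_subset_ball hρ1 (hin w hw s hs)), fun s hs hs0 => ?_⟩
      · exact (hh.mono hr1U).comp (by fun_prop)
          (fun s hs => ball_subset_ball hρ1 (hin w hw s hs))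
      · have hxU := hr1U (ball_subset_ball hρ1 (hin w hw s hs))
        have h1 := hψ2 _ (ball_subset_ball hρ2 (hin w hw s hs)) w s rfl
          ((hφZ _ hxU hs0).trans hφp.symm)
        exact hw2 (h1 ▸ hs0)
    · intro s hs
      have h0 := hin 0 (by simpa using hρ0) s hs
      have hxU : p + s • e ∈ U := by
        have := hr1U (ball_subset_ball hρ1 h0)
        simpa using this
      have hc : ContinuousAt h (p + s • e) := (hh.differentiableAt (hU.mem_nhds hxU)).continuousAt
      have hc2 : Tendsto (fun w : K => p + w + s • e) (𝓝 0) (𝓝 (p + s • e)) := by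
        have : Continuous (fun w : K => p + (w : E) + s • e) := by fun_prop
        simpa using this.tendsto 0
      exact (hc.tendsto.comp hc2).mono_left hl1
  -- f ∘ ψ is locally constant
  have hconst : ∀ᶠ w in 𝓝 (0 : K), f (ψ w) = f (ψ 0) := by
    apply sq_const (f := fun w => f (ψ w))
    filter_upwards [hψZ, hψU, hψ1] with w hw1 hw2 hw3
    have h1 : HasFDerivAt f (0 : E →L[ℂ] E) (ψ w) := by
      rw [← hhz _ hw2 hw1]
      exact (hd.differentiableAt (hU.mem_nhds hw2)).hasFDerivAt
    have h2 := h1.comp w hw3.2.1.hasFDerivAt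
    rw [ContinuousLinearMap.zero_comp] at h2
    exact ⟨h2.differentiableAt, h2.fderiv⟩
  apply sq_not_ev_eq (0 : K)
  filter_upwards [hconst, hψU, hψ1] with w hw1 hw2 hw3
  have h1 : ψ w = ψ 0 := hinj hw2 (by rw [hψ0]; exact hpU) hw1
  obtain ⟨s, hs⟩ := hw3.2.2
  rw [h1, hψ0, add_assoc] at hs
  have h2 : (w : E) + s • e = 0 := (add_eq_left.1 hs.symm)
  have h3 := congrArg (fderiv ℂ φ p) h2
  have hw0 : fderiv ℂ φ p w = 0 := w.2
  rw [map_add, map_smul, hw0, map_zero, zero_add, smul_eq_mul] at h3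
  have h4 : s = 0 := (mul_eq_zero.1 h3).resolve_right hφe
  rw [h4, zero_smul, add_zero] at h2
  exact Subtype.ext h2

theorem sq_osgood (n : ℕ) : ∀ (E : Type) [NormedAddCommGroup E] [NormedSpace ℂ E]
    [FiniteDimensional ℂ E], Module.finrank ℂ E = n → ∀ (f : E → E) (U : Set E), IsOpen U →
    DifferentiableOn ℂ f U → InjOn f U → ∀ a ∈ U, Function.Injective (fderiv ℂ f a) := by
  induction n with
  | zero =>
    intro E _ _ _ hn f U hU hd hinj a ha
    have : Subsingleton E := Module.finrank_zero_iff.1 hn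
    exact Function.injective_of_subsingleton _
  | succ n IH =>
    intro E _ _ _ hn f U hU hd hinj
    have hA : ∀ x ∈ U, fderiv ℂ f x ≠ 0 → Function.Injective (fderiv ℂ f x) :=
      fun x hx hne => sq_osgoodA hn IH hU hd hinj hx hne
    intro a ha
    apply hA a ha
    intro ha0
    rcases n with _ | n
    · -- one dimensional case
      let J : E ≃L[ℂ] ℂ := ContinuousLinearEquiv.ofFinrankEq (by simpa using hn)
      have hV : IsOpen (J.symm ⁻¹' U) := hU.preimage J.symm.continuous
      have h1 : DifferentiableOn ℂ (fun s => J (f (J.symm s))) (J.symm ⁻¹' U) :=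
        J.differentiable.comp_differentiableOn
          (hd.comp J.symm.differentiable.differentiableOn (fun s hs => hs))
      refine sq_inj1 hV h1 (fun x hx y hy hxy => ?_) (a := J a) (by simpa using ha) ?_
      · exact J.symm.injective (hinj hx hy (J.injective hxy))
      · have h2 : HasFDerivAt f (0 : E →L[ℂ] E) (J.symm (J a)) := by
          rw [J.symm_apply_apply, ← ha0]
          exact (hd.differentiableAt (hU.mem_nhds ha)).hasFDerivAt
        have h3 := (J : E →L[ℂ] ℂ).hasFDerivAt.comp (J a)
          (h2.comp (J a) (J.symm : ℂ →L[ℂ] E).hasFDerivAt)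
        rw [ContinuousLinearMap.zero_comp, ContinuousLinearMap.comp_zero] at h3
        have h4 := h3.hasDerivAt.deriv
        rw [zero_apply] at h4
        exact h4
    · exact sq_osgoodB hn hU hd hinj hA ha ha0

open Filter Topology

/-- Quantitative openness along a convergent family. -/
theorem sq_open {E : Type} [NormedAddCommGroup E] [NormedSpace ℂ E] [FiniteDimensional ℂ E]
    {ι : Type} (l : Ultrafilter ι) (f : ι → E → E) (g : E → E) (a : E) {R M : ℝ} (hR : 0 < R)
    (h : ∀ᶠ i in l, DifferentiableOn ℂ (f i) (ball a R) ∧ ∀ y ∈ ball a R, ‖f i y‖ ≤ M)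
    (hg : ∀ y ∈ ball a R, Tendsto (fun i => f i y) l (𝓝 (g y)))
    (hdet : (fderiv ℂ g a).det ≠ 0) {ε0 : ℝ} (hε0 : 0 < ε0) :
    ∃ η > 0, ∀ᶠ i in l, closedBall (f i a) η ⊆ f i '' closedBall a ε0 := by
  have : CompleteSpace E := FiniteDimensional.complete ℂ E
  obtain ⟨-, hDt⟩ := sq_weier l f g a hR h hg
  by_cases hS : Subsingleton E
  · refine ⟨1, one_pos, Eventually.of_forall fun i x _ => ⟨a, by simp [hε0.le], Subsingleton.elim _ _⟩⟩
  have hNT : Nontrivial E := not_subsingleton_iff_nontrivial.1 hS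
  let A : E ≃L[ℂ] E := (fderiv ℂ g a).toContinuousLinearEquivOfDetNeZero hdet
  have hA : (A : E →L[ℂ] E) = fderiv ℂ g a :=
    ContinuousLinearMap.coe_toContinuousLinearEquivOfDetNeZero _ hdet
  let q : NNReal := A.toNonlinearRightInverse.nnnorm
  have hq : 0 < q := by
    have : 0 < ‖(A.symm : E →L[ℂ] E)‖₊ := A.nnnorm_symm_pos
    exact this
  let c : NNReal := q⁻¹ / 2
  have hc : 0 < c := by positivity
  have hM : 0 ≤ M := by
    obtain ⟨i, hi⟩ := h.exists
    exact (norm_nonneg _).trans (hi.2 a (mem_ball_self hR))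
  obtain ⟨ε, hε, hε1, hε2, hε3⟩ : ∃ ε > 0, 2 * ε ≤ R ∧ ε ≤ ε0 ∧ 32 * M / R ^ 2 * ε ≤ c / 2 := by
    refine ⟨min (R / 2) (min ε0 (c / 2 / (32 * M / R ^ 2 + 1))), by positivity, ?_, ?_, ?_⟩
    · have := min_le_left (R / 2) (min ε0 (c / 2 / (32 * M / R ^ 2 + 1))); linarith
    · exact (min_le_right _ _).trans (min_le_left _ _)
    · have h1 : min (R / 2) (min ε0 (c / 2 / (32 * M / R ^ 2 + 1))) ≤
        c / 2 / (32 * M / R ^ 2 + 1) := (min_le_right _ _).trans (min_le_right _ _)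
      have h0 : 0 ≤ 32 * M / R ^ 2 := by positivity
      calc _ ≤ 32 * M / R ^ 2 * (c / 2 / (32 * M / R ^ 2 + 1)) := by gcongr
        _ ≤ (32 * M / R ^ 2 + 1) * (c / 2 / (32 * M / R ^ 2 + 1)) := by gcongr; linarith
        _ = c / 2 := by field_simp
  refine ⟨c * (ε / 2), by positivity, ?_⟩
  have hev : ∀ᶠ i in l, ‖fderiv ℂ (f i) a - fderiv ℂ g a‖ < c / 2 := by
    have := Metric.tendsto_nhds.1 hDt (c / 2) (by positivity)
    simpa [dist_eq_norm] using this
  filter_upwards [h, hev] with i hi hi2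
  have h1 := (sq_approx hε hε1 hi.1 hi.2).2
  have h2 : ApproximatesLinearOn (f i) (A : E →L[ℂ] E) (ball a ε) c := by
    intro x hx y hy
    have e1 := h1 x hx y hy
    have e2 : f i x - f i y - A (x - y) = (f i x - f i y - fderiv ℂ (f i) a (x - y)) +
      (fderiv ℂ (f i) a - fderiv ℂ g a) (x - y) := by
      have : A (x - y) = fderiv ℂ g a (x - y) := by rw [← hA]; rfl
      rw [this, sub_apply]; abel
    change ‖f i x - f i y - A (x - y)‖ ≤ _
    rw [e2]
    refine (norm_add_le _ _).trans ?_
    have e3 := (fderiv ℂ (f i) a - fderiv ℂ g a).le_opNorm (x - y)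
    have e4 : ‖fderiv ℂ (f i) a - fderiv ℂ g a‖ * ‖x - y‖ ≤ c / 2 * ‖x - y‖ := by gcongr
    have e5 : 32 * M / R ^ 2 * ε * ‖x - y‖ ≤ c / 2 * ‖x - y‖ := by gcongr
    linarith
  have h3 := h2.surjOn_closedBall_of_nonlinearRightInverse A.toNonlinearRightInverse
    (ε := ε / 2) (b := a) (by positivity) (closedBall_subset_ball (by linarith))
  have h4 : ((A.toNonlinearRightInverse.nnnorm : ℝ)⁻¹ - c) = c := by
    change (q : ℝ)⁻¹ - ((q⁻¹ / 2 : NNReal) : ℝ) = ((q⁻¹ / 2 : NNReal) : ℝ)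
    push_cast; ring
  rw [h4] at h3
  exact h3.trans (image_mono (closedBall_subset_closedBall (by linarith)))

/-- Differentiability of the inverse. -/
theorem sq_inv {E : Type} [NormedAddCommGroup E] [NormedSpace ℂ E] [FiniteDimensional ℂ E]
    {f g : E → E} {U B : Set E} (hU : IsOpen U) (hB : IsOpen B) (hd : DifferentiableOn ℂ f U)
    (hinj : InjOn f U) (hg : ∀ w ∈ B, g w ∈ U ∧ f (g w) = w) : DifferentiableOn ℂ g B := by
  have : CompleteSpace E := FiniteDimensional.complete ℂ E
  intro w hw
  obtain ⟨hgU, hgw⟩ := hg w hw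
  have hdet : (fderiv ℂ f (g w)).det ≠ 0 :=
    (sq_det_iff _).2 (sq_osgood _ E rfl f U hU hd hinj _ hgU)
  let A : E ≃L[ℂ] E := (fderiv ℂ f (g w)).toContinuousLinearEquivOfDetNeZero hdet
  have hA : (A : E →L[ℂ] E) = fderiv ℂ f (g w) :=
    ContinuousLinearMap.coe_toContinuousLinearEquivOfDetNeZero _ hdet
  have hs : HasStrictFDerivAt f (A : E →L[ℂ] E) (g w) := by
    rw [hA]
    exact (sq_contDiff hU hd hgU).hasStrictFDerivAt (by simp)
  have h1 := hs.to_localInverse.hasFDerivAt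
  have h2 := hs.eventually_right_inverse
  have h3 := hs.localInverse_apply_image
  have h4 : ContinuousAt (hs.localInverse f A (g w)) (f (g w)) := h1.continuousAt
  rw [hgw] at h1 h2 h3 h4
  have h5 : ∀ᶠ y in 𝓝 w, hs.localInverse f A (g w) y ∈ U := by
    apply h4.eventually_mem
    rw [h3]; exact hU.mem_nhds hgU
  have h6 : g =ᶠ[𝓝 w] hs.localInverse f A (g w) := by
    filter_upwards [h2, h5, hB.mem_nhds hw] with y hy1 hy2 hy3
    exact hinj (hg y hy3).1 hy2 ((hg y hy3).2.trans hy1.symm)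
  exact (h1.congr_of_eventuallyEq h6).differentiableAt.differentiableWithinAt

/-- Determinant is bounded on bounded sets. -/
theorem sq_det_bdd (E : Type) [NormedAddCommGroup E] [NormedSpace ℂ E] [FiniteDimensional ℂ E]
    (K : ℝ) : ∃ C : ℝ, ∀ A : E →L[ℂ] E, ‖A‖ ≤ K → ‖A.det‖ ≤ C := by
  have : FiniteDimensional ℂ (E →L[ℂ] E) := inferInstance
  have : ProperSpace (E →L[ℂ] E) := FiniteDimensional.proper ℂ _
  obtain ⟨C, hC⟩ := (isCompact_closedBall (0 : E →L[ℂ] E) K).exists_bound_of_continuousOn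
    (f := fun A => A.det) ContinuousLinearMap.continuous_det.continuousOn
  exact ⟨C, fun A hA => hC A (by simpa using hA)⟩

/-- Hurwitz for Jacobian determinants. -/
theorem sq_hurwitz {E : Type} [NormedAddCommGroup E] [NormedSpace ℂ E] [FiniteDimensional ℂ E]
    {ι : Type} (l : Ultrafilter ι) (F : ι → E → E) (G : E → E) {U : Set E} (hU : IsOpen U)
    (hconn : IsPreconnected U) {M : ℝ}
    (h : ∀ x ∈ U, ∃ R > 0, ball x R ⊆ U ∧ ∀ᶠ i in l, DifferentiableOn ℂ (F i) (ball x R) ∧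
      InjOn (F i) (ball x R) ∧ ∀ y ∈ ball x R, ‖F i y‖ ≤ M)
    (hG : ∀ x ∈ U, Tendsto (fun i => F i x) l (𝓝 (G x))) {z0 : E} (hz0 : z0 ∈ U)
    (hdet : (fderiv ℂ G z0).det ≠ 0) :
    DifferentiableOn ℂ G U ∧ ∀ x ∈ U, (fderiv ℂ G x).det ≠ 0 := by
  have hGd : DifferentiableOn ℂ G U := by
    intro x hx
    obtain ⟨R, hR, hRU, hev⟩ := h x hx
    exact (sq_weier l F G x hR (hev.mono fun i hi => ⟨hi.1, hi.2.2⟩)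
      (fun y hy => hG y (hRU hy))).1.differentiableWithinAt
  refine ⟨hGd, ?_⟩
  have hcont : ContinuousOn (fun x => (fderiv ℂ G x).det) U := (sq_det_diff hU hGd).continuousOn
  have hop : IsOpen (U ∩ (fun x => (fderiv ℂ G x).det) ⁻¹' {0}ᶜ) :=
    hcont.isOpen_inter_preimage hU isOpen_compl_singleton
  have hsub := hconn.subset_of_closure_inter_subset hop ⟨z0, hz0, hz0, hdet⟩ (by
    rintro x ⟨hxc, hx⟩
    refine ⟨hx, ?_⟩
    obtain ⟨R, hR, hRU, hev⟩ := h x hx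
    obtain ⟨y, ⟨hyU, hy0⟩, hyx⟩ := Metric.mem_closure_iff.1 hxc (R / 4) (by positivity)
    have hy0' : (fderiv ℂ G y).det ≠ 0 := hy0
    obtain ⟨C, hC⟩ := sq_det_bdd E (2 * M / (R / 2))
    have hye : ‖y - x‖ < R / 4 := by rwa [dist_comm, dist_eq_norm] at hyx
    have hmem : ∀ s ∈ ball (0 : ℂ) 2, x + s • (y - x) ∈ ball x (R / 2) := by
      intro s hs
      rw [mem_ball_zero_iff] at hs
      rw [mem_ball, dist_eq_norm, add_sub_cancel_left, norm_smul]
      have := norm_nonneg (y - x)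
      nlinarith [norm_nonneg s]
    have hsm : ∀ s ∈ ball (0 : ℂ) 2, ball (x + s • (y - x)) (R / 2) ⊆ ball x R := by
      intro s hs
      apply ball_subset_ball'
      have := hmem s hs
      rw [mem_ball] at this
      linarith
    have key := sq_hurwitz1 l (fun i s => (fderiv ℂ (F i) (x + s • (y - x))).det)
      (fun s => (fderiv ℂ G (x + s • (y - x))).det) (R := 2) (M := C) two_pos ?_ ?_ (s1 := 1)
      (by simp) (by simpa using hy0')
    · simpa using key
    · filter_upwards [hev] with i hi
      refine ⟨?_, fun s hs => ?_, fun s hs => ?_⟩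
      · have h9 : DifferentiableOn ℂ (fun s : ℂ => x + s • (y - x)) (ball 0 2) := by fun_prop
        have h10 := (sq_det_diff isOpen_ball hi.1).comp h9
          (fun s hs => ball_subset_ball (by linarith) (hmem s hs))
        exact h10
      · apply hC
        exact (sq_quad (half_pos hR) (hi.1.mono (hsm s hs)) (fun w hw => hi.2.2 w (hsm s hs hw))).1
      · exact (sq_det_iff _).2 (sq_osgood _ E rfl (F i) (ball x R) isOpen_ball hi.1 hi.2.1 _
          (ball_subset_ball (by linarith) (hmem s hs)))
    · intro s hs
      have := (sq_weier l F G (x + s • (y - x)) (half_pos hR) (M := M)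
        (hev.mono fun i hi => ⟨hi.1.mono (hsm s hs), fun w hw => hi.2.2 w (hsm s hs hw)⟩)
        (fun w hw => hG w (hRU (hsm s hs hw)))).2
      exact (ContinuousLinearMap.continuous_det.tendsto _).comp this)
  exact fun x hx => (hsub hx).2

open Filter Topology

theorem sq_limit {E : Type} [NormedAddCommGroup E] [NormedSpace ℂ E] [FiniteDimensional ℂ E]
    (Ω : ℕ → Set E) (hopen : ∀ j, IsOpen (Ω j)) (hmono : Monotone Ω)
    (hbd : Bornology.IsBounded (⋃ j, Ω j)) (z : E) {j0 : ℕ} (hz : z ∈ Ω j0) {ρ : ℝ} (hρ : 0 < ρ)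
    (hf : ∀ j, z ∈ Ω j → ∃ f : E → E, DifferentiableOn ℂ f (Ω j) ∧ InjOn f (Ω j) ∧ f z = 0 ∧
      f '' Ω j ⊆ ball 0 1 ∧ ball 0 ρ ⊆ f '' Ω j) :
    ∃ (V : Set E) (f : E → E), IsOpen V ∧ IsOpen ((⋃ j, Ω j) \ V) ∧ z ∈ V ∧ V ⊆ ⋃ j, Ω j ∧
      DifferentiableOn ℂ f V ∧ InjOn f V ∧ f z = 0 ∧ (∀ x ∈ V, ‖f x‖ ≤ 1) ∧
      ball 0 ρ ⊆ f '' V := by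
  have : CompleteSpace E := FiniteDimensional.complete ℂ E
  have : ProperSpace E := FiniteDimensional.proper ℂ E
  have : LocallyConnectedSpace E := by
    let _ : NormedSpace ℝ E := NormedSpace.restrictScalars ℝ ℂ E
    infer_instance
  set O := ⋃ j, Ω j with hO
  have hOo : IsOpen O := isOpen_iUnion hopen
  have hf' : ∀ j, ∃ f : E → E, z ∈ Ω j → (DifferentiableOn ℂ f (Ω j) ∧ InjOn f (Ω j) ∧ f z = 0 ∧
      f '' Ω j ⊆ ball 0 1 ∧ ball 0 ρ ⊆ f '' Ω j) := by
    intro j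
    by_cases hj : z ∈ Ω j
    · obtain ⟨f, h⟩ := hf j hj
      exact ⟨f, fun _ => h⟩
    · exact ⟨id, fun h => absurd h hj⟩
  choose f hf using hf'
  have hg' : ∀ j w, ∃ x, z ∈ Ω j → w ∈ ball (0 : E) ρ → x ∈ Ω j ∧ f j x = w := by
    intro j w
    by_cases hj : z ∈ Ω j
    · by_cases hw : w ∈ ball (0 : E) ρ
      · obtain ⟨x, hx⟩ := (hf j hj).2.2.2.2 hw
        exact ⟨x, fun _ _ => hx⟩
      · exact ⟨0, fun _ h => absurd h hw⟩
    · exact ⟨0, fun h => absurd h hj⟩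
  choose g hg using hg'
  obtain ⟨M0, hM0⟩ := hbd.exists_norm_le
  let l : Ultrafilter ℕ := Filter.hyperfilter ℕ
  have hl : ∀ k, ∀ᶠ j in (l : Filter ℕ), k ≤ j := fun k => Nat.hyperfilter_le_atTop (eventually_ge_atTop k)
  have hzl : ∀ᶠ j in l, z ∈ Ω j := (hl j0).mono fun j hj => hmono hj hz
  have hloc : ∀ x ∈ O, ∃ k, x ∈ Ω k := fun x hx => mem_iUnion.1 hx
  have hxl : ∀ x ∈ O, ∀ᶠ j in l, x ∈ Ω j := by
    intro x hx
    obtain ⟨k, hk⟩ := hloc x hx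
    exact (hl k).mono fun j hj => hmono hj hk
  have hfb : ∀ j, z ∈ Ω j → ∀ x ∈ Ω j, ‖f j x‖ ≤ 1 := by
    intro j hj x hx
    exact (mem_ball_zero_iff.1 ((hf j hj).2.2.2.1 ⟨x, hx, rfl⟩)).le
  have hgb : ∀ j, z ∈ Ω j → ∀ w ∈ ball (0 : E) ρ, ‖g j w‖ ≤ M0 := by
    intro j hj w hw
    exact hM0 _ (mem_iUnion.2 ⟨j, (hg j w hj hw).1⟩)
  have hF' : ∀ x, ∃ a : E, x ∈ O → ‖a‖ ≤ 1 ∧ Tendsto (fun j => f j x) l (𝓝 a) := by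
    intro x
    by_cases hx : x ∈ O
    · obtain ⟨a, ha⟩ := sq_ultra l (fun j => f j x) 1 (by
        filter_upwards [hzl, hxl x hx] with j h1 h2 using hfb j h1 x h2)
      exact ⟨a, fun _ => ha⟩
    · exact ⟨0, fun h => absurd h hx⟩
  choose F hF using hF'
  have hG' : ∀ w, ∃ a : E, w ∈ ball (0 : E) ρ → ‖a‖ ≤ M0 ∧ Tendsto (fun j => g j w) l (𝓝 a) := by
    intro w
    by_cases hw : w ∈ ball (0 : E) ρ
    · obtain ⟨a, ha⟩ := sq_ultra l (fun j => g j w) M0 (by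
        filter_upwards [hzl] with j h1 using hgb j h1 w hw)
      exact ⟨a, fun _ => ha⟩
    · exact ⟨0, fun h => absurd h hw⟩
  choose G hG using hG'
  have h0B : (0 : E) ∈ ball (0 : E) ρ := mem_ball_self hρ
  have hzO : z ∈ O := mem_iUnion.2 ⟨j0, hz⟩
  have hgd : ∀ j, z ∈ Ω j → DifferentiableOn ℂ (g j) (ball 0 ρ) := fun j hj =>
    sq_inv (hopen j) isOpen_ball (hf j hj).1 (hf j hj).2.1 (fun w hw => hg j w hj hw)
  have hgi : ∀ j, z ∈ Ω j → InjOn (g j) (ball 0 ρ) := by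
    intro j hj w hw w' hw' hww
    rw [← (hg j w hj hw).2, hww, (hg j w' hj hw').2]
  have hg0 : ∀ j, z ∈ Ω j → g j 0 = z := by
    intro j hj
    exact (hf j hj).2.1 (hg j 0 hj h0B).1 hj ((hg j 0 hj h0B).2.trans (hf j hj).2.2.1.symm)
  have hFz : F z = 0 := by
    refine tendsto_nhds_unique (hF z hzO).2 (tendsto_const_nhds.congr' ?_)
    filter_upwards [hzl] with j hj using (hf j hj).2.2.1.symm
  have hGz : G 0 = z := by
    refine tendsto_nhds_unique (hG 0 h0B).2 (tendsto_const_nhds.congr' ?_)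
    filter_upwards [hzl] with j hj using (hg0 j hj).symm
  -- local control
  have hlocf : ∀ x, ∀ W : Set E, IsOpen W → x ∈ W → x ∈ O → ∃ R > 0, ball x R ⊆ W ∧
      ball x R ⊆ O ∧ ∀ᶠ i in l, DifferentiableOn ℂ (f i) (ball x R) ∧
      InjOn (f i) (ball x R) ∧ ∀ y ∈ ball x R, ‖f i y‖ ≤ 1 := by
    intro x W hW hxW hx
    obtain ⟨k, hk⟩ := hloc x hx
    obtain ⟨R, hR, hRs⟩ := Metric.isOpen_iff.1 (hW.inter (hopen k)) x ⟨hxW, hk⟩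
    refine ⟨R, hR, fun y hy => (hRs hy).1, fun y hy => mem_iUnion.2 ⟨k, (hRs hy).2⟩, ?_⟩
    filter_upwards [hzl, hl k] with j hj hkj
    have hs : ball x R ⊆ Ω j := fun y hy => hmono hkj (hRs hy).2
    exact ⟨(hf j hj).1.mono hs, (hf j hj).2.1.mono hs, fun y hy => hfb j hj y (hs hy)⟩
  have hlocg : ∀ w ∈ ball (0 : E) ρ, ∃ R > 0, ball w R ⊆ ball (0 : E) ρ ∧
      ∀ᶠ i in l, DifferentiableOn ℂ (g i) (ball w R) ∧
      InjOn (g i) (ball w R) ∧ ∀ y ∈ ball w R, ‖g i y‖ ≤ M0 := by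
    intro w hw
    obtain ⟨R, hR, hRs⟩ := Metric.isOpen_iff.1 isOpen_ball w hw
    refine ⟨R, hR, hRs, ?_⟩
    filter_upwards [hzl] with j hj
    exact ⟨(hgd j hj).mono hRs, (hgi j hj).mono hRs, fun y hy => hgb j hj y (hRs hy)⟩
  -- determinants at the base points
  have hdet1 : (fderiv ℂ F z).det * (fderiv ℂ G 0).det = 1 := by
    obtain ⟨R, hR, -, hRO, hev⟩ := hlocf z univ isOpen_univ trivial hzO
    have t1 := (sq_weier l f F z hR (hev.mono fun i hi => ⟨hi.1, hi.2.2⟩)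
      (fun y hy => (hF y (hRO hy)).2)).2
    obtain ⟨R', hR', hRB, hev'⟩ := hlocg 0 h0B
    have t2 := (sq_weier l g G 0 hR' (hev'.mono fun i hi => ⟨hi.1, hi.2.2⟩)
      (fun y hy => (hG y (hRB hy)).2)).2
    have t3 := ((ContinuousLinearMap.continuous_det.tendsto _).comp t1).mul
      ((ContinuousLinearMap.continuous_det.tendsto _).comp t2)
    refine tendsto_nhds_unique t3 (tendsto_const_nhds.congr' ?_)
    filter_upwards [hzl] with j hj
    have e1 : HasFDerivAt (f j) (fderiv ℂ (f j) z) (g j 0) := by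
      rw [hg0 j hj]
      exact ((hf j hj).1.differentiableAt ((hopen j).mem_nhds hj)).hasFDerivAt
    have e2 : HasFDerivAt (g j) (fderiv ℂ (g j) 0) 0 :=
      ((hgd j hj).differentiableAt (isOpen_ball.mem_nhds h0B)).hasFDerivAt
    have e3 := e1.comp 0 e2
    have e4 : HasFDerivAt (f j ∘ g j) (ContinuousLinearMap.id ℂ E) 0 := by
      refine (hasFDerivAt_id (𝕜 := ℂ) (0 : E)).congr_of_eventuallyEq ?_
      filter_upwards [isOpen_ball.mem_nhds h0B] with w hw using (hg j w hj hw).2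
    have e5 := e3.unique e4
    change (1 : ℂ) = (fderiv ℂ (f j) z).det * (fderiv ℂ (g j) 0).det
    have e6 : ((fderiv ℂ (f j) z).comp (fderiv ℂ (g j) 0)).det = 1 := by
      rw [e5]
      simp [ContinuousLinearMap.det]
    rw [← e6]
    simp only [ContinuousLinearMap.det]
    rw [← LinearMap.det_comp]
    rfl
  have hdF : (fderiv ℂ F z).det ≠ 0 := left_ne_zero_of_mul (by rw [hdet1]; exact one_ne_zero)
  have hdG : (fderiv ℂ G 0).det ≠ 0 := right_ne_zero_of_mul (by rw [hdet1]; exact one_ne_zero)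
  -- the component
  let V : Set E := connectedComponentIn O z
  have hVo : IsOpen V := hOo.connectedComponentIn
  have hVO : V ⊆ O := connectedComponentIn_subset O z
  have hVp : IsPreconnected V := isPreconnected_connectedComponentIn
  have hzV : z ∈ V := mem_connectedComponentIn hzO
  obtain ⟨hFd, hFdet⟩ := sq_hurwitz l f F hVo hVp (M := 1) (fun x hx => by
    obtain ⟨R, hR, h1, h2, h3⟩ := hlocf x V hVo hx (hVO hx)
    exact ⟨R, hR, h1, h3⟩) (fun x hx => (hF x (hVO hx)).2) hzV hdF
  have hBp : IsPreconnected (ball (0 : E) ρ) := by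
    let _ : NormedSpace ℝ E := NormedSpace.restrictScalars ℝ ℂ E
    exact (convex_ball _ _).isPreconnected
  obtain ⟨hGd, hGdet⟩ := sq_hurwitz l g G isOpen_ball hBp (M := M0) hlocg
    (fun x hx => (hG x hx).2) h0B hdG
  have hGO : ∀ w ∈ ball (0 : E) ρ, G w ∈ O := by
    intro w hw
    obtain ⟨R, hR, hRB, hev⟩ := hlocg w hw
    obtain ⟨η, hη, hev2⟩ := sq_open l g G w hR (hev.mono fun i hi => ⟨hi.1, hi.2.2⟩)
      (fun y hy => (hG y (hRB hy)).2) (hGdet w hw) (half_pos hR)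
    have hev3 : ∀ᶠ i in l, dist (g i w) (G w) < η := Metric.tendsto_nhds.1 (hG w hw).2 η hη
    obtain ⟨j, h1, h2, h3⟩ := (hev2.and (hev3.and hzl)).exists
    obtain ⟨y, hy, hyw⟩ := h1 (show G w ∈ closedBall (g j w) η by
      rw [mem_closedBall, dist_comm]; exact h2.le)
    rw [← hyw]
    exact mem_iUnion.2 ⟨j, (hg j y h3
      (hRB (closedBall_subset_ball (by linarith) hy))).1⟩
  have hFG : ∀ w ∈ ball (0 : E) ρ, F (G w) = w := by
    intro w hw
    obtain ⟨R, hR, -, hRO, hev⟩ := hlocf (G w) univ isOpen_univ trivial (hGO w hw)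
    have t1 : Tendsto (fun j => ‖g j w - G w‖) l (𝓝 0) := by
      have := ((hG w hw).2.sub_const (G w)).norm
      simpa using this
    have t2 : Tendsto (fun j => f j (g j w) - f j (G w)) l (𝓝 0) := by
      refine squeeze_zero_norm' (a := fun j => 2 * 1 / R * ‖g j w - G w‖) ?_
        (by simpa using t1.const_mul (2 * 1 / R))
      have hev3 : ∀ᶠ i in l, dist (g i w) (G w) < R := Metric.tendsto_nhds.1 (hG w hw).2 R hR
      filter_upwards [hev, hev3] with j h1 h2
      exact sq_lip h1.1 h1.2.2 (g j w) h2
    have t3 : Tendsto (fun j => f j (g j w) - f j (G w)) l (𝓝 (w - F (G w))) := by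
      refine (tendsto_const_nhds.sub (hF _ (hGO w hw)).2).congr' ?_
      filter_upwards [hzl] with j hj
      rw [(hg j w hj hw).2]
    exact (sub_eq_zero.1 (tendsto_nhds_unique t3 t2)).symm
  have hGV : ∀ w ∈ ball (0 : E) ρ, G w ∈ V := by
    have h1 : IsPreconnected (G '' ball 0 ρ) := hBp.image G hGd.continuousOn
    have h2 : G '' ball 0 ρ ⊆ V :=
      h1.subset_connectedComponentIn ⟨0, h0B, hGz⟩ (image_subset_iff.2 hGO)
    exact fun w hw => h2 ⟨w, hw, rfl⟩
  have hFinj : InjOn F V := by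
    intro a ha b hb hab
    by_contra hne
    have hd : 0 < dist a b := dist_pos.2 hne
    obtain ⟨R, hR, -, hRO, hev⟩ := hlocf a univ isOpen_univ trivial (hVO ha)
    obtain ⟨k, hk⟩ := hloc a (hVO ha)
    obtain ⟨r, hr, hrk⟩ := Metric.isOpen_iff.1 (hopen k) a hk
    obtain ⟨η, hη, hev2⟩ := sq_open l f F a hR (hev.mono fun i hi => ⟨hi.1, hi.2.2⟩)
      (fun y hy => (hF y (hRO hy)).2) (hFdet a ha) (ε0 := min (dist a b / 2) (r / 2))
      (by positivity)
    have t : Tendsto (fun j => dist (f j b) (f j a)) l (𝓝 0) := by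
      have := (hF b (hVO hb)).2.dist (hF a (hVO ha)).2
      rwa [hab, dist_self] at this
    have hev3 : ∀ᶠ j in l, dist (f j b) (f j a) < η := t.eventually_lt_const hη
    obtain ⟨j, h1, h2, h3, h4, h5⟩ :=
      (hev2.and (hev3.and (hzl.and ((hl k).and (hxl b (hVO hb)))))).exists
    obtain ⟨y, hy, hyb⟩ := h1 (show f j b ∈ closedBall (f j a) η from h2.le)
    rw [mem_closedBall] at hy
    have hyΩ : y ∈ Ω j := hmono h4 (hrk (by
      rw [mem_ball]
      have := min_le_right (dist a b / 2) (r / 2)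
      linarith))
    have hyb' : y = b := (hf j h3).2.1 hyΩ h5 hyb
    rw [hyb', dist_comm] at hy
    have := min_le_left (dist a b / 2) (r / 2)
    linarith
  refine ⟨V, F, hVo, ?_, hzV, hVO, hFd, hFinj, hFz, fun x hx => (hF x (hVO hx)).1,
    fun w hw => ⟨G w, hGV w hw, hFG w hw⟩⟩
  rw [isOpen_iff_mem_nhds]
  rintro x ⟨hxO, hxV⟩
  refine mem_of_superset (hOo.connectedComponentIn.mem_nhds (mem_connectedComponentIn hxO)) ?_
  intro y hy
  refine ⟨connectedComponentIn_subset _ _ hy, fun hyV => hxV ?_⟩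
  have e1 : connectedComponentIn O x = connectedComponentIn O y := connectedComponentIn_eq hy
  have e2 : connectedComponentIn O z = connectedComponentIn O y := connectedComponentIn_eq hyV
  change x ∈ connectedComponentIn O z
  rw [e2, ← e1]
  exact mem_connectedComponentIn hxO

/-- Gluing: pass from the component to the whole bounded open set. -/
theorem sq_glue {E : Type} [NormedAddCommGroup E] [NormedSpace ℂ E] [Nontrivial E]
    {O V : Set E} (hbd : Bornology.IsBounded O) (hV : IsOpen V) (hOV : IsOpen (O \ V)) {z : E}
    (hz : z ∈ V) (hVO : V ⊆ O) {f : E → E} (hd : DifferentiableOn ℂ f V) (hi : InjOn f V)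
    (hfz : f z = 0) (hf1 : ∀ x ∈ V, ‖f x‖ ≤ 1) {ρ : ℝ} (hρ : ball 0 ρ ⊆ f '' V)
    {t : ℝ} (ht0 : 0 < t) (ht1 : t < 1) :
    ∃ F : E → E, DifferentiableOn ℂ F O ∧ InjOn F O ∧ F z = 0 ∧ F '' O ⊆ ball 0 1 ∧
      ball 0 (t * ρ) ⊆ F '' O := by
  classical
  obtain ⟨M, hM⟩ := hbd.exists_norm_le
  have hM0 : 0 ≤ M := (norm_nonneg _).trans (hM z (hVO hz))
  obtain ⟨c, hc⟩ : ∃ c : E, ‖c‖ = (1 + t) / 2 := by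
    let _ : NormedSpace ℝ E := NormedSpace.restrictScalars ℝ ℂ E
    exact exists_norm_eq E (by positivity)
  let κ : ℝ := (1 - t) / 4 / (M + 1)
  have hκ : 0 < κ := by
    have : 0 < 1 - t := by linarith
    positivity
  have hκM : κ * M ≤ (1 - t) / 4 := by
    have : κ * (M + 1) = (1 - t) / 4 := by simp only [κ]; field_simp
    nlinarith
  have hκc : ((κ : ℝ) : ℂ) ≠ 0 := by exact_mod_cast hκ.ne'
  let A : E → E := fun x => c + (κ : ℂ) • x
  have hA : ∀ x ∈ O, t < ‖A x‖ ∧ ‖A x‖ < 1 := by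
    intro x hx
    have h1 : ‖(κ : ℂ) • x‖ ≤ (1 - t) / 4 := by
      rw [norm_smul, Complex.norm_real, Real.norm_of_nonneg hκ.le]
      exact (mul_le_mul_of_nonneg_left (hM x hx) hκ.le).trans hκM
    have h2 : ‖A x‖ ≤ ‖c‖ + ‖(κ : ℂ) • x‖ := norm_add_le _ _
    have h3 : ‖c‖ ≤ ‖A x‖ + ‖(κ : ℂ) • x‖ := by
      have := norm_sub_le (A x) ((κ : ℂ) • x)
      simpa [A] using this
    constructor <;> linarith
  let F : E → E := fun x => if x ∈ V then (t : ℂ) • f x else A x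
  have hFV : ∀ x ∈ V, F x = (t : ℂ) • f x := fun x hx => if_pos hx
  have hFA : ∀ x, x ∉ V → F x = A x := fun x hx => if_neg hx
  have htc : (t : ℂ) ≠ 0 := by exact_mod_cast ht0.ne'
  have hnV : ∀ x ∈ V, ‖F x‖ ≤ t := by
    intro x hx
    rw [hFV x hx, norm_smul, Complex.norm_real, Real.norm_of_nonneg ht0.le]
    exact mul_le_of_le_one_right ht0.le (hf1 x hx)
  have hnA : ∀ x ∈ O, x ∉ V → t < ‖F x‖ ∧ ‖F x‖ < 1 := by
    intro x hx hxV
    rw [hFA x hxV]; exact hA x hx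
  refine ⟨F, ?_, ?_, ?_, ?_, ?_⟩
  · intro x hx
    apply DifferentiableAt.differentiableWithinAt
    by_cases hxV : x ∈ V
    · have h1 : DifferentiableAt ℂ (fun x => (t : ℂ) • f x) x :=
        (hd.differentiableAt (hV.mem_nhds hxV)).const_smul (t : ℂ)
      refine h1.congr_of_eventuallyEq ?_
      filter_upwards [hV.mem_nhds hxV] with y hy using hFV y hy
    · have h1 : DifferentiableAt ℂ A x := by simp only [A]; fun_prop
      refine h1.congr_of_eventuallyEq ?_
      filter_upwards [hOV.mem_nhds ⟨hx, hxV⟩] with y hy using hFA y hy.2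
  · intro x hx y hy hxy
    by_cases hxV : x ∈ V
    · by_cases hyV : y ∈ V
      · rw [hFV x hxV, hFV y hyV] at hxy
        exact hi hxV hyV (smul_right_injective E htc hxy)
      · have := hnV x hxV
        have h2 := (hnA y hy hyV).1
        rw [hxy] at this
        linarith
    · by_cases hyV : y ∈ V
      · have := hnV y hyV
        have h2 := (hnA x hx hxV).1
        rw [hxy] at h2
        linarith
      · rw [hFA x hxV, hFA y hyV] at hxy
        exact smul_right_injective E hκc (add_left_cancel hxy)
  · rw [hFV z hz, hfz, smul_zero]
  · rintro _ ⟨x, hx, rfl⟩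
    rw [mem_ball_zero_iff]
    by_cases hxV : x ∈ V
    · exact (hnV x hxV).trans_lt ht1
    · exact (hnA x hx hxV).2
  · intro w hw
    rw [mem_ball_zero_iff] at hw
    obtain ⟨x, hx, hxw⟩ := hρ (show (t : ℂ)⁻¹ • w ∈ ball 0 ρ by
      rw [mem_ball_zero_iff, norm_smul, norm_inv, Complex.norm_real, Real.norm_of_nonneg ht0.le,
        inv_mul_lt_iff₀ ht0]
      exact hw)
    exact ⟨x, hVO hx, by rw [hFV x hx, hxw, smul_inv_smul₀ htc]⟩

/-- If Ω_j is an increasing sequence of open sets with bounded union Ω,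
z ∈ Ω, δ ∈ (0,1), and S_{Ω_j}(z) > 1 - δ whenever z ∈ Ω_j, then S_Ω(z) ≥ 1 - δ. -/
theorem squeezing_of_exhaustion {n : ℕ}
    (Ω : ℕ → Set (EuclideanSpace ℂ (Fin n)))
    (hopen : ∀ j, IsOpen (Ω j))
    (hmono : ∀ j, Ω j ⊆ Ω (j + 1))
    (hbd : Bornology.IsBounded (⋃ j, Ω j))
    (z : EuclideanSpace ℂ (Fin n)) (hz : z ∈ ⋃ j, Ω j)
    (δ : ℝ) (hδ0 : 0 < δ) (hδ1 : δ < 1)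
    (hsq : ∀ j, z ∈ Ω j → squeezingFun (Ω j) z > 1 - δ) :
    squeezingFun (⋃ j, Ω j) z ≥ 1 - δ := by
  obtain ⟨j0, hj0⟩ := mem_iUnion.1 hz
  have hρ : 0 < 1 - δ := by linarith
  have hne : ∀ j, z ∈ Ω j → ∃ f : EuclideanSpace ℂ (Fin n) → EuclideanSpace ℂ (Fin n),
      DifferentiableOn ℂ f (Ω j) ∧ InjOn f (Ω j) ∧ f z = 0 ∧
      f '' Ω j ⊆ ball 0 1 ∧ ball 0 (1 - δ) ⊆ f '' Ω j := by
    intro j hj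
    have h1 := hsq j hj
    unfold squeezingFun at h1
    have h2 : Set.Nonempty {r : ℝ | 0 < r ∧
        ∃ f : EuclideanSpace ℂ (Fin n) → EuclideanSpace ℂ (Fin n),
        DifferentiableOn ℂ f (Ω j) ∧ Set.InjOn f (Ω j) ∧ f z = 0 ∧
        f '' Ω j ⊆ ball 0 1 ∧ ball 0 r ⊆ f '' Ω j} := by
      by_contra hcon
      rw [Set.not_nonempty_iff_eq_empty] at hcon
      rw [hcon, Real.sSup_empty] at h1
      linarith
    obtain ⟨r, ⟨hr0, f, h3, h4, h5, h6, h7⟩, hr⟩ := exists_lt_of_lt_csSup h2 h1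
    exact ⟨f, h3, h4, h5, h6, (ball_subset_ball hr.le).trans h7⟩
  rcases Nat.eq_zero_or_pos n with hn | hn
  · -- degenerate dimension
    subst hn
    exfalso
    have h1 := hsq j0 hj0
    unfold squeezingFun at h1
    rw [Real.sSup_of_not_bddAbove] at h1
    · linarith
    · rintro ⟨C, hC⟩
      have := hC (show |C| + 1 ∈ _ from ⟨by positivity, id, differentiableOn_id, injOn_id _,
        Subsingleton.elim _ _, fun x _ => by simp [Subsingleton.elim x 0],
        fun x _ => ⟨z, hj0, Subsingleton.elim _ _⟩⟩)
      linarith [le_abs_self C]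
  have : Nonempty (Fin n) := ⟨⟨0, hn⟩⟩
  have : Nontrivial (EuclideanSpace ℂ (Fin n)) := inferInstance
  obtain ⟨V, f, hV, hOV, hzV, hVO, hd, hi, hfz, hf1, hfρ⟩ :=
    sq_limit Ω hopen (monotone_nat_of_le_succ hmono) hbd z hj0 hρ hne
  have hBdd : BddAbove {r : ℝ | 0 < r ∧
      ∃ f : EuclideanSpace ℂ (Fin n) → EuclideanSpace ℂ (Fin n),
      DifferentiableOn ℂ f (⋃ j, Ω j) ∧ Set.InjOn f (⋃ j, Ω j) ∧ f z = 0 ∧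
      f '' (⋃ j, Ω j) ⊆ ball 0 1 ∧ ball 0 r ⊆ f '' (⋃ j, Ω j)} := by
    refine ⟨1, ?_⟩
    rintro r ⟨hr, f, -, -, -, h1, h2⟩
    by_contra hcon
    push Not at hcon
    obtain ⟨x, hx⟩ := exists_norm_eq (EuclideanSpace ℂ (Fin n)) zero_le_one
    have := h1 (h2 (show x ∈ ball 0 r by rw [mem_ball_zero_iff, hx]; exact hcon))
    rw [mem_ball_zero_iff, hx] at this
    exact lt_irrefl _ this
  have key : ∀ t : ℝ, 0 < t → t < 1 → t * (1 - δ) ≤ squeezingFun (⋃ j, Ω j) z := by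
    intro t ht0 ht1
    obtain ⟨F, hF⟩ := sq_glue hbd hV hOV hzV hVO hd hi hfz hf1 hfρ ht0 ht1
    exact le_csSup hBdd ⟨by positivity, F, hF⟩
  apply le_of_forall_lt
  intro c hc
  rcases lt_or_ge 0 c with h0 | h0
  · have h1 : c / (1 - δ) < 1 := (div_lt_one hρ).2 hc
    obtain ⟨t, ht, ht'⟩ := exists_between h1
    have ht0 : 0 < t := (div_pos h0 hρ).trans ht
    exact ((div_lt_iff₀ hρ).1 ht).trans_le (key t ht0 ht')
  · have := key (1 / 2) (by norm_num) (by norm_num)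
    linarith
end

section
/- Let f_j : Ω → 𝔹ⁿ be a sequence of injective holomorphic maps on a domain Ω ⊆ ℂⁿ with f_j(z₀) = 0 for a fixed z₀ ∈ Ω, converging uniformly on compact subsets to a map f : Ω → closure(𝔹ⁿ). Suppose the inverses g_j = f_j⁻¹ : B_{1-δ}(0) → Ω are defined on B_{1-δ}(0) (i.e., B_{1-δ}(0) ⊆ f_j(Ω)) and converge uniformly on compacts to g : B_{1-δ}(0) → ℂⁿ with g nonconstant. Then f restricted to g(B_{1-δ}(0)) is the inverse of g, and B_{1-δ}(0) ⊆ f(Ω). -/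
open Metric Set Filter

section SCV
open Topology

/-- Cauchy estimate for the Fréchet derivative. -/
theorem scv_cauchy {E F : Type*} [NormedAddCommGroup E] [NormedSpace ℂ E]
    [NormedAddCommGroup F] [NormedSpace ℂ F] {f : E → F} {c : E} {R M : ℝ} (hR : 0 < R)
    (hf : DifferentiableOn ℂ f (ball c R)) (hM : ∀ x ∈ ball c R, ‖f x‖ ≤ M) :
    ‖fderiv ℂ f c‖ ≤ 2 * M / R := by
  refine Complex.norm_fderiv_le_div_of_mapsTo_ball hf (fun x hx => ?_) hR
  rw [mem_closedBall, dist_eq_norm]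
  have h1 := hM x hx
  have h2 := hM c (mem_ball_self hR)
  have h3 := norm_sub_le (f x) (f c)
  linarith

/-- Locally uniform limits of holomorphic maps are holomorphic, and the derivatives converge
locally uniformly. -/
theorem scv_limit {E F : Type*} [NormedAddCommGroup E] [NormedSpace ℂ E] [FiniteDimensional ℂ E]
    [NormedAddCommGroup F] [NormedSpace ℂ F] [CompleteSpace F] {f : ℕ → E → F} {g : E → F}
    {U : Set E} (hU : IsOpen U) (hf : ∀ k, DifferentiableOn ℂ (f k) U)
    (hlim : TendstoLocallyUniformlyOn f g atTop U) :
    DifferentiableOn ℂ g U ∧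
      TendstoLocallyUniformlyOn (fun k => fderiv ℂ (f k)) (fderiv ℂ g) atTop U := by
  have key : ∀ x ∈ U, ∃ r > 0, ball x r ⊆ U ∧ (∀ y ∈ ball x r, DifferentiableAt ℂ g y) ∧
      TendstoUniformlyOn (fun k => fderiv ℂ (f k)) (fderiv ℂ g) atTop (ball x r) := by
    intro x hx
    obtain ⟨t, ht, htl⟩ : ∃ t ∈ 𝓝 x, TendstoUniformlyOn f g atTop t := by
      have : ProperSpace E := FiniteDimensional.proper ℂ E
      obtain ⟨ρ, hρ, hb⟩ := Metric.nhds_basis_closedBall.mem_iff.1 (hU.mem_nhds hx)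
      exact ⟨closedBall x ρ, closedBall_mem_nhds x hρ,
        (tendstoLocallyUniformlyOn_iff_forall_isCompact hU).1 hlim _ hb
          (isCompact_closedBall x ρ)⟩
    obtain ⟨ρ, hρ, hball⟩ := Metric.mem_nhds_iff.1 (inter_mem ht (hU.mem_nhds hx))
    have hρt : ball x ρ ⊆ t := fun y hy => (hball hy).1
    have hρU : ball x ρ ⊆ U := fun y hy => (hball hy).2
    have hsub : ∀ y ∈ ball x (ρ / 2), ball y (ρ / 2) ⊆ ball x ρ := by
      intro y hy
      apply ball_subset_ball'
      rw [mem_ball] at hy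
      linarith
    have hsub' : ball x (ρ / 2) ⊆ ball x ρ := ball_subset_ball (by linarith)
    have hda : ∀ k, ∀ y ∈ ball x ρ, DifferentiableAt ℂ (f k) y := fun k y hy =>
      (hf k).differentiableAt (hU.mem_nhds (hρU hy))
    have hC : UniformCauchySeqOn (fun k => fderiv ℂ (f k)) atTop (ball x (ρ / 2)) := by
      have h1 := (htl.mono hρt).uniformCauchySeqOn
      rw [Metric.uniformCauchySeqOn_iff] at h1 ⊢
      intro ε hε
      obtain ⟨N, hN⟩ := h1 (ε * ρ / 8) (by positivity)
      refine ⟨N, fun m hm n hn y hy => ?_⟩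
      have h2 := scv_cauchy (f := fun z => f m z - f n z) (c := y) (R := ρ / 2)
        (M := ε * ρ / 8) (by positivity)
        (fun z hz => ((hda m z (hsub y hy hz)).sub (hda n z (hsub y hy hz))).differentiableWithinAt)
        (fun z hz => by
          have := hN m hm n hn z (hsub y hy hz)
          rw [dist_eq_norm] at this
          exact this.le)
      rw [fderiv_fun_sub (hda m y (hsub' hy)) (hda n y (hsub' hy))] at h2
      rw [dist_eq_norm]
      refine h2.trans_lt ?_
      rw [div_lt_iff₀ (by positivity)]
      nlinarith [mul_pos hε hρ]
    have hex : ∀ y, ∃ G : E →L[ℂ] F, y ∈ ball x (ρ / 2) →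
        Tendsto (fun k => fderiv ℂ (f k) y) atTop (𝓝 G) := by
      intro y
      by_cases hy : y ∈ ball x (ρ / 2)
      · obtain ⟨G, hG⟩ := cauchySeq_tendsto_of_complete (hC.cauchySeq hy)
        exact ⟨G, fun _ => hG⟩
      · exact ⟨0, fun h => absurd h hy⟩
    choose G hG using hex
    have hunif := hC.tendstoUniformlyOn_of_tendsto (f := G) (fun y hy => hG y hy)
    have hder : ∀ y ∈ ball x (ρ / 2), HasFDerivAt g (G y) y := fun y hy =>
      hasFDerivAt_of_tendstoUniformlyOn isOpen_ball hunif
        (fun k z hz => (hda k z (hsub' hz)).hasFDerivAt)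
        (fun z hz => htl.tendsto_at (hρt (hsub' hz))) hy
    refine ⟨ρ / 2, by positivity, hsub'.trans hρU, fun y hy => (hder y hy).differentiableAt, ?_⟩
    exact hunif.congr_right (fun y hy => (hder y hy).fderiv.symm)
  refine ⟨fun x hx => ?_, ?_⟩
  · obtain ⟨r, hr, _, h, _⟩ := key x hx
    exact (h x (mem_ball_self hr)).differentiableWithinAt
  · intro u hu x hx
    obtain ⟨r, hr, _, _, h⟩ := key x hx
    exact ⟨ball x r, mem_nhdsWithin_of_mem_nhds (ball_mem_nhds x hr), h u hu⟩

/-- A holomorphic map is locally Lipschitz together with its derivative. -/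
theorem scv_lip {E F : Type*} [NormedAddCommGroup E] [NormedSpace ℂ E]
    [NormedAddCommGroup F] [NormedSpace ℂ F] {f : E → F}
    {U : Set E} (hU : IsOpen U) (hf : DifferentiableOn ℂ f U) {x : E} (hx : x ∈ U) :
    ∃ r > 0, ball x r ⊆ U ∧ ∃ L : ℝ, 0 ≤ L ∧ ∀ y ∈ ball x r, ∀ z ∈ ball x r,
      ‖fderiv ℂ f y - fderiv ℂ f z‖ ≤ L * ‖y - z‖ := by
  have hcont : ContinuousAt f x := (hf.continuousOn).continuousAt (hU.mem_nhds hx)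
  have hb : ∀ᶠ y in 𝓝 x, ‖f y‖ < ‖f x‖ + 1 :=
    hcont.norm.eventually_lt continuousAt_const (by linarith)
  obtain ⟨ρ, hρ, hball⟩ := Metric.mem_nhds_iff.1 (inter_mem hb (hU.mem_nhds hx))
  have hρU : ball x ρ ⊆ U := fun y hy => (hball hy).2
  have hρb : ∀ y ∈ ball x ρ, ‖f y‖ ≤ ‖f x‖ + 1 := fun y hy => (hball hy).1.le
  set M := ‖f x‖ + 1
  have hM : 0 < M := by positivity
  have hda : ∀ y ∈ ball x ρ, DifferentiableAt ℂ f y := fun y hy =>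
      hf.differentiableAt (hU.mem_nhds (hρU hy))
  have hsub : ∀ y ∈ ball x (ρ / 2), ball y (ρ / 2) ⊆ ball x ρ := by
    intro y hy
    apply ball_subset_ball'
    rw [mem_ball] at hy
    linarith
  have hd1 : ∀ y ∈ ball x (ρ / 2), ‖fderiv ℂ f y‖ ≤ 2 * M / (ρ / 2) := fun y hy =>
    scv_cauchy (by positivity) (fun z hz => (hda z (hsub y hy hz)).differentiableWithinAt)
      (fun z hz => hρb z (hsub y hy hz))
  have hlip : ∀ y ∈ ball x (ρ / 2), ∀ z ∈ ball x (ρ / 2),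
      ‖f y - f z‖ ≤ 2 * M / (ρ / 2) * ‖y - z‖ := fun y hy z hz =>
    Convex.norm_image_sub_le_of_norm_fderiv_le (𝕜 := ℂ) (s := ball x (ρ / 2))
      (fun w hw => hda w (ball_subset_ball (by linarith) hw)) hd1
      (convex_ball x _) hz hy
  refine ⟨ρ / 4, by positivity, (ball_subset_ball (by linarith)).trans hρU,
    2 * (2 * M / (ρ / 2)) / (ρ / 4), by positivity, fun y hy z hz => ?_⟩
  have hsy : ∀ y ∈ ball x (ρ / 4), ∀ w ∈ ball (0:E) (ρ / 4), w + y ∈ ball x (ρ / 2) := by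
    intro y hy w hw
    rw [mem_ball, dist_eq_norm] at *
    have : w + y - x = (w - 0) + (y - x) := by abel
    rw [this]
    have := norm_add_le (w - 0) (y - x)
    linarith
  have hh : ball x (ρ / 2) ⊆ ball x ρ := ball_subset_ball (by linarith)
  have hdy : ∀ y ∈ ball x (ρ / 4), ∀ w ∈ ball (0:E) (ρ / 4),
      HasFDerivAt (fun w => f (w + y)) (fderiv ℂ f (w + y)) w := fun y hy w hw =>
    (hasFDerivAt_comp_add_right y).2 (hda _ (hh (hsy y hy w hw))).hasFDerivAt
  have h0 : (0:E) ∈ ball (0:E) (ρ / 4) := mem_ball_self (by positivity)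
  have h2 := scv_cauchy (f := fun w => f (w + y) - f (w + z)) (c := (0:E)) (R := ρ / 4)
        (M := 2 * M / (ρ / 2) * ‖y - z‖) (by positivity)
        (fun w hw => ((hdy y hy w hw).sub (hdy z hz w hw)).differentiableAt.differentiableWithinAt)
        (fun w hw => by
          have := hlip _ (hsy y hy w hw) _ (hsy z hz w hw)
          simpa using this)
  have h3 : HasFDerivAt (fun w => f (w + y) - f (w + z)) _ (0:E) := (hdy y hy 0 h0).sub (hdy z hz 0 h0)
  rw [h3.fderiv] at h2
  simp only [zero_add] at h2
  refine h2.trans (le_of_eq ?_)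
  ring

theorem scv_dirderiv {E F : Type*} [NormedAddCommGroup E] [NormedSpace ℂ E] [FiniteDimensional ℂ E]
    [NormedAddCommGroup F] [NormedSpace ℂ F] [CompleteSpace F] {f : E → F}
    {U : Set E} (hU : IsOpen U) (hf : DifferentiableOn ℂ f U) (v : E) :
    DifferentiableOn ℂ (fun x => fderiv ℂ f x v) U := by
  intro x hx
  obtain ⟨r, hr, hrU, L, hL, hlip⟩ := scv_lip hU hf hx
  have hda : ∀ y ∈ ball x r, DifferentiableAt ℂ f y := fun y hy =>
      hf.differentiableAt (hU.mem_nhds (hrU hy))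
  obtain ⟨s, hs, hsv⟩ : ∃ s : ℝ, 0 < s ∧ s * ‖v‖ < r / 2 :=
    ⟨r / 4 / (‖v‖ + 1), by positivity, by
      rw [div_mul_eq_mul_div, div_lt_iff₀ (by positivity)]
      nlinarith [norm_nonneg v]⟩
  let t : ℕ → ℝ := fun k => s / (k + 1)
  have ht : ∀ k, 0 < t k := fun k => by positivity
  have hts : ∀ k, t k ≤ s := fun k => div_le_self hs.le (by simp)
  have htv : ∀ k, t k * ‖v‖ < r / 2 := fun k =>
    (mul_le_mul_of_nonneg_right (hts k) (norm_nonneg v)).trans_lt hsv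
  have hmem : ∀ k, ∀ y ∈ ball x (r / 2), y + (t k : ℂ) • v ∈ ball x r := by
    intro k y hy
    rw [mem_ball, dist_eq_norm] at *
    have h1 : y + (t k : ℂ) • v - x = (y - x) + (t k : ℂ) • v := by abel
    have h2 := norm_add_le (y - x) ((t k : ℂ) • v)
    have h3 : ‖(t k : ℂ) • v‖ = t k * ‖v‖ := by
      rw [norm_smul, Complex.norm_real, Real.norm_eq_abs, abs_of_pos (ht k)]
    rw [h1]
    linarith [htv k]
  have hh : ball x (r / 2) ⊆ ball x r := ball_subset_ball (by linarith)
  have hlim := scv_limit (f := fun k y => (t k : ℂ)⁻¹ • (f (y + (t k : ℂ) • v) - f y))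
    (g := fun y => fderiv ℂ f y v) (U := ball x (r / 2)) isOpen_ball
    (fun k y hy => by
      have h1 : DifferentiableAt ℂ (fun y => f (y + (t k : ℂ) • v)) y :=
        ((hasFDerivAt_comp_add_right _).2 (hda _ (hmem k y hy)).hasFDerivAt).differentiableAt
      exact ((h1.sub (hda y (hh hy))).const_smul _).differentiableWithinAt)
    (by
      apply TendstoUniformlyOn.tendstoLocallyUniformlyOn
      rw [Metric.tendstoUniformlyOn_iff]
      intro ε hε
      have htend : Tendsto (fun k => L * (t k) * ‖v‖ ^ 2) atTop (𝓝 0) := by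
        have h1 : Tendsto t atTop (𝓝 0) := by
          have := (tendsto_one_div_add_atTop_nhds_zero_nat (𝕜 := ℝ)).const_mul s
          simpa [t, div_eq_mul_inv] using this
        simpa using (h1.const_mul L).mul_const (‖v‖ ^ 2)
      filter_upwards [htend.eventually_lt_const hε] with k hk y hy
      have h3 : ‖(t k : ℂ) • v‖ = t k * ‖v‖ := by
        rw [norm_smul, Complex.norm_real, Real.norm_eq_abs, abs_of_pos (ht k)]
      have hseg : segment ℝ y (y + (t k : ℂ) • v) ⊆ ball x r :=
        (convex_ball x r).segment_subset (hh hy) (hmem k y hy)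
      have hmv := Convex.norm_image_sub_le_of_norm_fderiv_le' (𝕜 := ℂ) (f := f)
        (φ := fderiv ℂ f y) (C := L * (t k * ‖v‖)) (s := segment ℝ y (y + (t k : ℂ) • v))
        (fun w hw => hda w (hseg hw))
        (fun w hw => by
          refine (hlip w (hseg hw) y (hh hy)).trans ?_
          refine mul_le_mul_of_nonneg_left ?_ hL
          have h4 := norm_sub_le_of_mem_segment hw
          rw [← h3]
          simpa using h4)
        (convex_segment _ _) (left_mem_segment ℝ _ _) (right_mem_segment ℝ _ _)
      rw [add_sub_cancel_left, h3] at hmv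
      rw [dist_comm, dist_eq_norm]
      have htk : (t k : ℂ) ≠ 0 := by exact_mod_cast (ht k).ne'
      have h5 : (t k : ℂ)⁻¹ • (f (y + (t k : ℂ) • v) - f y) - fderiv ℂ f y v
          = (t k : ℂ)⁻¹ • (f (y + (t k : ℂ) • v) - f y - fderiv ℂ f y ((t k : ℂ) • v)) := by
        rw [smul_sub (_ : ℂ) (_ - _), map_smul, smul_smul, inv_mul_cancel₀ htk, one_smul]
      rw [h5, norm_smul, norm_inv, Complex.norm_real, Real.norm_eq_abs, abs_of_pos (ht k)]
      refine lt_of_le_of_lt ?_ hk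
      rw [inv_mul_le_iff₀ (ht k)]
      refine hmv.trans (le_of_eq ?_)
      ring)
  exact (hlim.1.differentiableAt (ball_mem_nhds x (by positivity))).differentiableWithinAt

theorem scv_contDiffOn {E F : Type*} [NormedAddCommGroup E] [NormedSpace ℂ E]
    [FiniteDimensional ℂ E]
    [NormedAddCommGroup F] [NormedSpace ℂ F] [CompleteSpace F]
    {U : Set E} (hU : IsOpen U) (m : ℕ) {f : E → F} (hf : DifferentiableOn ℂ f U) :
    ContDiffOn ℂ m f U := by
  induction m generalizing f with
  | zero => exact contDiffOn_zero.2 hf.continuousOn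
  | succ m ih =>
    push_cast
    rw [contDiffOn_succ_iff_fderiv_of_isOpen hU]
    refine ⟨hf, by simp, ?_⟩
    rw [contDiffOn_clm_apply]
    exact fun v => ih (scv_dirderiv hU hf v)

end SCV

section SCV2
open Topology

theorem scv_straighten {E : Type*} [NormedAddCommGroup E] [NormedSpace ℂ E]
    [FiniteDimensional ℂ E] {u : E → ℂ} {U : Set E} (hU : IsOpen U)
    (hu : DifferentiableOn ℂ u U) {a v : E} (ha : a ∈ U) (hv : fderiv ℂ u a v = 1) :
    ∃ Ψ : E → E, ∃ r > 0, DifferentiableOn ℂ Ψ (ball a r) ∧ InjOn Ψ (ball a r) ∧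
      MapsTo Ψ (ball a r) U ∧ Ψ a = a ∧ HasFDerivAt Ψ (ContinuousLinearMap.id ℂ E) a ∧
      ∀ y ∈ ball a r, u (Ψ y) = u a + fderiv ℂ u a (y - a) := by
  have : CompleteSpace E := FiniteDimensional.complete ℂ E
  set A := fderiv ℂ u a with hA
  let Φ : E → E := fun x => x + (u x - u a - A (x - a)) • v
  have hua : HasFDerivAt u A a := (hu.differentiableAt (hU.mem_nhds ha)).hasFDerivAt
  have huc : ContDiffAt ℂ 1 u a := (scv_contDiffOn hU 1 hu).contDiffAt (hU.mem_nhds ha)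
  have hΦc : ContDiffAt ℂ 1 Φ a := by
    refine contDiffAt_id.add (ContDiffAt.smul ?_ contDiffAt_const)
    refine (huc.sub contDiffAt_const).sub ?_
    exact A.contDiff.contDiffAt.comp a (contDiffAt_id.sub contDiffAt_const)
  have hΦd : HasFDerivAt Φ ((ContinuousLinearEquiv.refl ℂ E : E ≃L[ℂ] E) : E →L[ℂ] E) a := by
    have h1 : HasFDerivAt (fun x => u x - u a - A (x - a)) (A - A) a :=
      (hua.sub_const _).sub (A.hasFDerivAt.comp a ((hasFDerivAt_id a).sub_const a))
    have h2 := (hasFDerivAt_id a).add (h1.smul_const v)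
    refine h2.congr_fderiv ?_
    ext x
    simp
  have hΦa : Φ a = a := by simp [Φ]
  have hs := hΦc.hasStrictFDerivAt' hΦd one_ne_zero
  let e := hs.toOpenPartialHomeomorph Φ
  have hae : a ∈ e.source := hs.mem_toOpenPartialHomeomorph_source
  have hat : a ∈ e.target := by
    have := hs.image_mem_toOpenPartialHomeomorph_target
    rwa [hΦa] at this
  have hea : e.symm a = a := by
    have := e.left_inv hae
    have h2 : e a = a := hΦa
    rwa [h2] at this
  have hd : HasStrictFDerivAt e.symm (ContinuousLinearMap.id ℂ E) a := by
    have := hs.to_localInverse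
    rw [hΦa] at this
    exact this
  have hcd : ContDiffAt ℂ 1 e.symm a := by
    have := hΦc.to_localInverse hΦd one_ne_zero
    rw [hΦa] at this
    exact this
  have hev : ∀ᶠ y in 𝓝 a, DifferentiableAt ℂ e.symm y :=
    (hcd.eventually (by simp)).mono fun y hy => hy.differentiableAt (by simp)
  have hev2 : ∀ᶠ y in 𝓝 a, e.symm y ∈ U :=
    hd.continuousAt.eventually_mem (by rw [hea]; exact hU.mem_nhds ha)
  have hev3 : ∀ᶠ y in 𝓝 a, y ∈ e.target := e.open_target.mem_nhds hat
  obtain ⟨r, hr, hball⟩ := Metric.eventually_nhds_iff_ball.1 (hev.and (hev2.and hev3))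
  refine ⟨e.symm, r, hr, fun y hy => (hball y hy).1.differentiableWithinAt,
    e.symm.injOn.mono (fun y hy => (hball y hy).2.2), fun y hy => (hball y hy).2.1, hea,
    hd.hasFDerivAt, fun y hy => ?_⟩
  have h1 : Φ (e.symm y) = y := e.right_inv (hball y hy).2.2
  have h2 : A (Φ (e.symm y) - a) = u (e.symm y) - u a := by
    have : Φ (e.symm y) - a = (e.symm y - a) +
      (u (e.symm y) - u a - A (e.symm y - a)) • v := by
        simp only [Φ]; abel
    rw [this, map_add, map_smul, hv]
    simp
  rw [h1] at h2
  rw [h2]; ring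

theorem scv_minmod {F : ℂ → ℂ} {t : ℂ} {r c : ℝ} (hr : 0 < r) (hc : 0 < c)
    (hF : ∀ s ∈ closedBall t r, DifferentiableAt ℂ F s) (h0 : ∀ s ∈ closedBall t r, F s ≠ 0)
    (hs : ∀ s ∈ sphere t r, c ≤ ‖F s‖) : c ≤ ‖F t‖ := by
  have h1 : ‖(F t)⁻¹‖ ≤ c⁻¹ := by
    refine Complex.norm_le_of_forall_mem_frontier_norm_le (f := fun s => (F s)⁻¹)
      (U := ball t r) isBounded_ball ?_ ?_ (subset_closure (mem_ball_self hr))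
    · refine DifferentiableOn.diffContOnCl ?_
      rw [closure_ball t hr.ne']
      exact fun s hs => ((hF s hs).inv (h0 s hs)).differentiableWithinAt
    · rw [frontier_ball t hr.ne']
      intro s hs'
      rw [norm_inv]
      exact inv_anti₀ hc (hs s hs')
  rw [norm_inv] at h1
  exact (inv_le_inv₀ (norm_pos_iff.2 (h0 t (mem_closedBall_self hr.le))) hc).1 h1

theorem scv_one {f : ℂ → ℂ} {U : Set ℂ} (hU : IsOpen U) (hf : DifferentiableOn ℂ f U)
    (hinj : InjOn f U) {a : ℂ} (ha : a ∈ U) : deriv f a ≠ 0 := by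
  intro hd0
  have han : ∀ x ∈ U, AnalyticAt ℂ f x := fun x hx => hf.analyticAt (hU.mem_nhds hx)
  have hnc : ∀ x ∈ U, ¬ ∀ᶠ z in 𝓝 x, f z = f x := by
    intro x hx h
    have h2 : ∀ᶠ z in 𝓝 x, z = x := by
      filter_upwards [h, hU.mem_nhds hx] with z hz hzU
      exact hinj hzU hx hz
    have h3 : ∀ᶠ z in 𝓝[≠] x, z = x := h2.filter_mono nhdsWithin_le_nhds
    have h4 : ∀ᶠ z in 𝓝[≠] x, z ≠ x := eventually_mem_nhdsWithin
    obtain ⟨z, hz1, hz2⟩ := (h3.and h4).exists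
    exact hz2 hz1
  have hopen : ∀ x ∈ U, 𝓝 (f x) ≤ map f (𝓝 x) := fun x hx =>
    ((han x hx).eventually_constant_or_nhds_le_map_nhds).resolve_left (hnc x hx)
  have hder : ∀ᶠ z in 𝓝[≠] a, deriv f z ≠ 0 := by
    refine ((han a ha).deriv.eventually_eq_zero_or_eventually_ne_zero).resolve_left ?_
    intro h
    apply hnc a ha
    obtain ⟨r, hr, hball⟩ := Metric.eventually_nhds_iff_ball.1 (h.and (hU.eventually_mem ha))
    filter_upwards [ball_mem_nhds a hr] with z hz
    exact isOpen_ball.is_const_of_deriv_eq_zero (convex_ball a r).isPreconnected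
      (fun y hy => (hf.differentiableAt (hU.mem_nhds (hball y hy).2)).differentiableWithinAt)
      (fun y hy => (hball y hy).1) hz (mem_ball_self hr)
  let g := Function.invFunOn f U
  have hgf : ∀ x ∈ U, g (f x) = x := fun x hx => hinj.leftInvOn_invFunOn hx
  have hgc : ∀ x ∈ U, ContinuousAt g (f x) := by
    intro x hx N hN
    rw [hgf x hx] at hN
    refine mem_map.2 (mem_of_superset (hopen x hx (image_mem_map (inter_mem hN (hU.mem_nhds hx)))) ?_)
    rintro _ ⟨y, hy, rfl⟩
    rw [mem_preimage, hgf y hy.2]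
    exact hy.1
  have hgd : ∀ᶠ w in 𝓝[≠] (f a), DifferentiableAt ℂ g w := by
    rw [eventually_nhdsWithin_iff] at hder ⊢
    refine mem_of_superset (hopen a ha (image_mem_map (inter_mem hder (hU.mem_nhds ha)))) ?_
    rintro _ ⟨y, hy, rfl⟩ hne
    have hya : y ≠ a := fun h => hne (by rw [h]; rfl)
    have hfg : ∀ᶠ w in 𝓝 (f y), f (g w) = w := by
      refine mem_of_superset (hopen y hy.2 (image_mem_map (hU.mem_nhds hy.2))) ?_
      rintro _ ⟨z, hz, rfl⟩
      simp only [mem_ofPred_eq, hgf z hz]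
    have h1 : HasDerivAt f (deriv f y) (g (f y)) := by
      rw [hgf y hy.2]
      exact (han y hy.2).differentiableAt.hasDerivAt
    exact (HasDerivAt.of_local_left_inverse (hgc y hy.2) h1 (hy.1 hya) hfg).differentiableAt
  have hga := (Complex.analyticAt_of_differentiable_on_punctured_nhds_of_continuousAt hgd
    (hgc a ha)).differentiableAt
  have h1 : HasDerivAt (g ∘ f) (deriv g (f a) * deriv f a) a :=
    hga.hasDerivAt.comp a (han a ha).differentiableAt.hasDerivAt
  have h2 : HasDerivAt (g ∘ f) 1 a := by
    refine (hasDerivAt_id a).congr_of_eventuallyEq ?_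
    filter_upwards [hU.mem_nhds ha] with x hx
    exact hgf x hx
  have := h1.unique h2
  rw [hd0] at this
  simp at this

theorem scv_det {D E : Type*} [NormedAddCommGroup D] [NormedSpace ℂ D]
    [NormedAddCommGroup E] [NormedSpace ℂ E] [FiniteDimensional ℂ E] {A : D → E →L[ℂ] E}
    {U : Set D} (hA : ∀ v, DifferentiableOn ℂ (fun x => A x v) U) :
    DifferentiableOn ℂ (fun x => LinearMap.det (A x : E →ₗ[ℂ] E)) U := by
  let b := Module.finBasis ℂ E
  have h : ∀ x, LinearMap.det (A x : E →ₗ[ℂ] E) =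
      (LinearMap.toMatrix b b (A x : E →ₗ[ℂ] E)).det := fun x => (LinearMap.det_toMatrix b _).symm
  simp only [h, Matrix.det_apply]
  refine DifferentiableOn.fun_sum fun σ _ => DifferentiableOn.const_smul (𝕜 := ℂ) ?_ _
  classical
  intro x hx
  refine HasFDerivWithinAt.differentiableWithinAt
    (HasFDerivWithinAt.finsetProd (𝕜 := ℂ) (𝔸' := ℂ) fun i _ =>
      DifferentiableWithinAt.hasFDerivWithinAt ?_)
  simp only [LinearMap.toMatrix_apply]
  have := (LinearMap.toContinuousLinearMap (b.coord (σ i))).differentiable.comp_differentiableOn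
    (hA (b i))
  exact this x hx

theorem scv_c1 {E : Type*} [NormedAddCommGroup E] [NormedSpace ℂ E]
    [FiniteDimensional ℂ E] {h : E → ℂ} {a : E} {ρ : ℝ}
    (hh : DifferentiableOn ℂ h (ball a ρ)) (ha : h a = 0) (hρ : 0 < ρ)
    (hne : ¬ ∀ x ∈ ball a ρ, h x = 0) :
    ∃ φ : E → ℂ, DifferentiableOn ℂ φ (ball a ρ) ∧ (∀ x ∈ ball a ρ, h x = 0 → φ x = 0) ∧
      ∃ b ∈ ball a ρ, h b = 0 ∧ fderiv ℂ φ b ≠ 0 := by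
  by_contra hcon
  push Not at hcon
  apply hne
  intro x hx
  by_cases hxa : x = a
  · rw [hxa, ha]
  let v := x - a
  have hv : 0 < ‖v‖ := norm_pos_iff.2 (sub_ne_zero.2 hxa)
  let φ : ℕ → E → ℂ := fun k => Nat.rec h (fun _ ψ => fun y => fderiv ℂ ψ y v) k
  have hφs : ∀ k y, φ (k + 1) y = fderiv ℂ (φ k) y v := fun k y => rfl
  have hφ : ∀ k, DifferentiableOn ℂ (φ k) (ball a ρ) ∧ ∀ y ∈ ball a ρ, h y = 0 → φ k y = 0 := by
    intro k
    induction k with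
    | zero => exact ⟨hh, fun y _ hy => hy⟩
    | succ k ih =>
      refine ⟨scv_dirderiv isOpen_ball ih.1 v, fun y hy hy0 => ?_⟩
      rw [hφs, hcon (φ k) ih.1 ih.2 y hy hy0]
      rfl
  let R := ρ / ‖v‖
  have hmem : ∀ t ∈ ball (0:ℂ) R, a + t • v ∈ ball a ρ := by
    intro t ht
    rw [mem_ball, dist_eq_norm, add_sub_cancel_left, norm_smul]
    rw [mem_ball_zero_iff] at ht
    exact (lt_div_iff₀ hv).1 ht
  have hder : ∀ k, ∀ t ∈ ball (0:ℂ) R,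
      HasDerivAt (fun t : ℂ => φ k (a + t • v)) (φ (k + 1) (a + t • v)) t := by
    intro k t ht
    have h1 := ((hφ k).1.differentiableAt (isOpen_ball.mem_nhds (hmem t ht))).hasFDerivAt
    have h2 : HasDerivAt (fun t : ℂ => a + t • v) v t := by
      simpa using ((hasDerivAt_id t).smul_const v).const_add a
    exact h1.comp_hasDerivAt t h2
  have hit : ∀ k, ∀ t ∈ ball (0:ℂ) R,
      iteratedDeriv k (fun t : ℂ => h (a + t • v)) t = φ k (a + t • v) := by
    intro k
    induction k with
    | zero => intro t _; simp; rfl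
    | succ k ih =>
      intro t ht
      rw [iteratedDeriv_succ]
      have : iteratedDeriv k (fun t : ℂ => h (a + t • v)) =ᶠ[𝓝 t] fun t => φ k (a + t • v) := by
        filter_upwards [isOpen_ball.mem_nhds ht] with s hs using ih s hs
      rw [this.deriv_eq]
      exact (hder k t ht).deriv
  have hRpos : 0 < R := by positivity
  have h1R : (1:ℂ) ∈ ball (0:ℂ) R := by
    rw [mem_ball_zero_iff, norm_one]
    rw [mem_ball, dist_eq_norm] at hx
    exact (one_lt_div hv).2 hx
  have hT := Complex.taylorSeries_eq_on_ball' (f := fun t : ℂ => h (a + t • v)) h1R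
    (fun t ht => (hder 0 t ht).differentiableAt.differentiableWithinAt)
  have hz : ∀ k, iteratedDeriv k (fun t : ℂ => h (a + t • v)) 0 = 0 := by
    intro k
    rw [hit k 0 (mem_ball_self hRpos), zero_smul, add_zero]
    exact (hφ k).2 a (mem_ball_self hρ) ha
  simp only [hz] at hT
  simp [v] at hT
  exact hT.symm

theorem scv_c2 {E : Type*} [NormedAddCommGroup E] [NormedSpace ℂ E]
    [FiniteDimensional ℂ E] {h φ : E → ℂ} {V : Set E} (hV : IsOpen V)
    (hh : DifferentiableOn ℂ h V) (hφ : DifferentiableOn ℂ φ V) {b v : E} (hb : b ∈ V)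
    (hb0 : h b = 0) (hz : ∀ x ∈ V, h x = 0 → φ x = 0) (hv : fderiv ℂ φ b v = 1) :
    ∃ Ψ : E → E, ∃ r > 0, DifferentiableOn ℂ Ψ (ball b r) ∧ InjOn Ψ (ball b r) ∧
      MapsTo Ψ (ball b r) V ∧
      ∀ y ∈ ball b r, fderiv ℂ φ b (y - b) = 0 → h (Ψ y) = 0 := by
  obtain ⟨Ψ, r, hr, hΨd, hΨi, hΨm, hΨb, -, hΨu⟩ := scv_straighten hV hφ hb hv
  have hφb : φ b = 0 := hz b hb hb0
  simp only [hφb, zero_add] at hΨu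
  set A := fderiv ℂ φ b
  let H : E → ℂ := h ∘ Ψ
  have hH : ∀ y ∈ ball b r, DifferentiableAt ℂ H y := fun y hy =>
    (hh.differentiableAt (hV.mem_nhds (hΨm hy))).comp y
      (hΨd.differentiableAt (isOpen_ball.mem_nhds hy))
  have hHz : ∀ y ∈ ball b r, H y = 0 → A (y - b) = 0 := fun y hy h0 => by
    rw [← hΨu y hy]
    exact hz _ (hΨm hy) h0
  obtain ⟨s, hs, hsv⟩ : ∃ s : ℝ, 0 < s ∧ s * ‖v‖ < r / 2 :=
    ⟨r / 4 / (‖v‖ + 1), by positivity, by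
      rw [div_mul_eq_mul_div, div_lt_iff₀ (by positivity)]
      nlinarith [norm_nonneg v]⟩
  have hmem : ∀ y ∈ ball b (r / 2), ∀ t ∈ closedBall (0:ℂ) s, y + t • v ∈ ball b r := by
    intro y hy t ht
    rw [mem_ball, dist_eq_norm] at *
    rw [mem_closedBall_zero_iff] at ht
    have h1 : y + t • v - b = (y - b) + t • v := by abel
    have h2 := norm_add_le (y - b) (t • v)
    have h3 : ‖t • v‖ ≤ s * ‖v‖ := by
      rw [norm_smul]; exact mul_le_mul_of_nonneg_right ht (norm_nonneg v)
    rw [h1]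
    linarith
  have hbb : b ∈ ball b (r / 2) := mem_ball_self (by positivity)
  have hnz : ∀ y ∈ ball b (r / 2), A (y - b) = 0 → ∀ t ∈ closedBall (0:ℂ) s, t ≠ 0 →
      H (y + t • v) ≠ 0 := by
    intro y hy hAy t ht ht0 h0
    have h1 := hHz _ (hmem y hy t ht) h0
    have h2 : y + t • v - b = (y - b) + t • v := by abel
    rw [h2, map_add, hAy, map_smul, hv] at h1
    simp at h1
    exact ht0 h1
  have hsph : IsCompact (sphere (0:ℂ) s) := isCompact_sphere 0 s
  have hs0 : ∀ t ∈ sphere (0:ℂ) s, t ≠ 0 := by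
    intro t ht h0
    rw [h0, mem_sphere, dist_self] at ht
    linarith
  have hline : ∀ t ∈ sphere (0:ℂ) s, ContinuousAt (fun p : E × ℂ => ‖H (p.1 + p.2 • v)‖) (b, t) := by
    intro t ht
    have h1 : ContinuousAt H (b + t • v) :=
      (hH _ (hmem b hbb t (sphere_subset_closedBall ht))).continuousAt
    exact (ContinuousAt.comp (f := fun p : E × ℂ => p.1 + p.2 • v) (x := (b, t)) h1
      (by fun_prop)).norm
  obtain ⟨c, hc, hcs⟩ : ∃ c > 0, ∀ t ∈ sphere (0:ℂ) s, c < ‖H (b + t • v)‖ := by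
    have hcont : ContinuousOn (fun t : ℂ => ‖H (b + t • v)‖) (sphere 0 s) := fun t ht =>
      (ContinuousAt.comp (f := fun t : ℂ => (b, t)) (x := t) (hline t ht)
        (by fun_prop)).continuousWithinAt
    obtain ⟨t, ht, hmin⟩ := hsph.exists_isMinOn (NormedSpace.sphere_nonempty.2 hs.le) hcont
    have hpos : 0 < ‖H (b + t • v)‖ := norm_pos_iff.2
      (hnz b hbb (by simp) t (sphere_subset_closedBall ht) (hs0 t ht))
    refine ⟨‖H (b + t • v)‖ / 2, by positivity, fun t' ht' => ?_⟩
    have : ‖H (b + t • v)‖ ≤ ‖H (b + t' • v)‖ := hmin ht'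
    linarith
  have hev1 : ∀ᶠ y in 𝓝 b, ∀ t ∈ sphere (0:ℂ) s, c < ‖H (y + t • v)‖ := by
    refine hsph.eventually_forall_of_forall_eventually fun t ht => ?_
    exact (hline t ht).eventually_const_lt (hcs t ht)
  have hHb : H b = 0 := by simp [H, hΨb, hb0]
  have hev2 : ∀ᶠ y in 𝓝 b, ‖H y‖ < c := by
    have h1 : ContinuousAt (fun y => ‖H y‖) b := (hH b (mem_ball_self hr)).continuousAt.norm
    exact h1.eventually_lt_const (by simpa [hHb] using hc)
  obtain ⟨η, hη, hball⟩ := Metric.eventually_nhds_iff_ball.1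
    ((hev1.and hev2).and (ball_mem_nhds b (half_pos hr)))
  have hηr : ball b η ⊆ ball b r := fun y hy =>
    ball_subset_ball (by linarith) (hball y hy).2
  refine ⟨Ψ, η, hη, hΨd.mono hηr, hΨi.mono hηr, hΨm.mono_left hηr, fun y hy hAy => ?_⟩
  by_contra hne
  obtain ⟨⟨h1, h2⟩, h3⟩ := hball y hy
  have h4 := scv_minmod (F := fun t : ℂ => H (y + t • v)) (t := 0) hs hc
    (fun t ht => DifferentiableAt.comp (f := fun t : ℂ => y + t • v) (g := H) t
      (hH _ (hmem y h3 t ht)) (by fun_prop))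
    (fun t ht => by
      by_cases ht0 : t = 0
      · rw [ht0, zero_smul, add_zero]; exact hne
      · exact hnz y h3 hAy t ht ht0)
    (fun t ht => (h1 t ht).le)
  simp only [zero_smul, add_zero] at h4
  linarith

end SCV2

section SCV3
open Topology

theorem scv_stepA {E F : Type} [NormedAddCommGroup E] [NormedSpace ℂ E]
    [FiniteDimensional ℂ E] [NormedAddCommGroup F] [NormedSpace ℂ F] [FiniteDimensional ℂ F]
    (n : ℕ)
    (ih : ∀ (E F : Type) [NormedAddCommGroup E] [NormedSpace ℂ E]
      [FiniteDimensional ℂ E] [NormedAddCommGroup F] [NormedSpace ℂ F] [FiniteDimensional ℂ F]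
      (_ : Module.finrank ℂ E = n) (_ : Module.finrank ℂ F = n) (U : Set E) (f : E → F)
      (_ : IsOpen U) (_ : DifferentiableOn ℂ f U) (_ : InjOn f U), ∀ x ∈ U,
      Function.Injective (fderiv ℂ f x))
    (hE : Module.finrank ℂ E = n + 1) (hF : Module.finrank ℂ F = n + 1) (U : Set E) (f : E → F)
    (hU : IsOpen U) (hf : DifferentiableOn ℂ f U) (hinj : InjOn f U) (a : E) (ha : a ∈ U)
    (hne : fderiv ℂ f a ≠ 0) : Function.Injective (fderiv ℂ f a) := by
  set A := fderiv ℂ f a with hA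
  have hfa : HasFDerivAt f A a := (hf.differentiableAt (hU.mem_nhds ha)).hasFDerivAt
  obtain ⟨v, hv⟩ : ∃ v, A v ≠ 0 := by
    by_contra h
    push Not at h
    exact hne (ContinuousLinearMap.ext h)
  obtain ⟨ℓ, hℓ⟩ := SeparatingDual.exists_eq_one (R := ℂ) hv
  let u : E → ℂ := fun x => ℓ (f x)
  have hu : DifferentiableOn ℂ u U := ℓ.differentiable.comp_differentiableOn hf
  have hua : HasFDerivAt u (ℓ.comp A) a := ℓ.hasFDerivAt.comp a hfa
  have huv : fderiv ℂ u a v = 1 := by rw [hua.fderiv]; exact hℓ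
  obtain ⟨Ψ, r, hr, hΨd, hΨi, hΨm, hΨa, hΨ', hΨu⟩ := scv_straighten hU hu ha huv
  rw [hua.fderiv] at hΨu
  let lam₁ : E →ₗ[ℂ] ℂ := (ℓ.comp A : E →L[ℂ] ℂ)
  let lam₂ : F →ₗ[ℂ] ℂ := (ℓ : F →L[ℂ] ℂ)
  let K₁ : Submodule ℂ E := LinearMap.ker lam₁
  let K₂ : Submodule ℂ F := LinearMap.ker lam₂
  have hK₁ : Module.finrank ℂ K₁ = n := by
    have h1 : lam₁ ≠ 0 := fun h => by
      have h2 : lam₁ v = 0 := by rw [h]; rfl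
      have h3 : lam₁ v = 1 := hℓ
      rw [h3] at h2
      exact one_ne_zero h2
    have := Module.Dual.finrank_ker_add_one_of_ne_zero (f := lam₁) h1
    rw [hE] at this
    exact Nat.succ_injective this
  have hK₂ : Module.finrank ℂ K₂ = n := by
    have h1 : lam₂ ≠ 0 := fun h => by
      have h2 : lam₂ (A v) = 0 := by rw [h]; rfl
      have h3 : lam₂ (A v) = 1 := hℓ
      rw [h3] at h2
      exact one_ne_zero h2
    have := Module.Dual.finrank_ker_add_one_of_ne_zero (f := lam₂) h1
    rw [hF] at this
    exact Nat.succ_injective this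
  let P : F →L[ℂ] K₂ := (ContinuousLinearMap.id ℂ F - ℓ.smulRight (A v)).codRestrict K₂ (by
    intro y
    change ℓ (y - ℓ y • A v) = 0
    rw [map_sub, map_smul, hℓ]
    simp)
  have hP : ∀ y, ℓ y = 0 → ((P y : K₂) : F) = y := by
    intro y hy
    change y - ℓ y • A v = y
    simp [hy]
  let G : K₁ → K₂ := fun k => P (f (Ψ (a + k)) - f a)
  have hmem : ∀ k ∈ ball (0 : K₁) r, a + (k : E) ∈ ball a r := by
    intro k hk
    rw [mem_ball, dist_eq_norm, add_sub_cancel_left]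
    rw [mem_ball_zero_iff] at hk
    exact hk
  have hin : ∀ k : K₁, HasFDerivAt (fun k : K₁ => a + (k : E)) K₁.subtypeL k := fun k =>
    (K₁.subtypeL.hasFDerivAt).const_add a
  have hGd : DifferentiableOn ℂ G (ball 0 r) := by
    intro k hk
    have h1 : DifferentiableAt ℂ (fun k : K₁ => Ψ (a + (k : E))) k :=
      (hΨd.differentiableAt (isOpen_ball.mem_nhds (hmem k hk))).comp k (hin k).differentiableAt
    have h2 : DifferentiableAt ℂ (fun k : K₁ => f (Ψ (a + (k : E)))) k :=
      (hf.differentiableAt (hU.mem_nhds (hΨm (hmem k hk)))).comp k h1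
    exact (P.differentiableAt.comp k (h2.sub_const (f a))).differentiableWithinAt
  have hGi : InjOn G (ball 0 r) := by
    have hval : ∀ k ∈ ball (0 : K₁) r, ((G k : K₂) : F) = f (Ψ (a + k)) - f a := by
      intro k hk
      apply hP
      have h1 := hΨu _ (hmem k hk)
      rw [add_sub_cancel_left] at h1
      have h2 : (ℓ.comp A) (k : E) = 0 := k.2
      rw [h2, add_zero] at h1
      rw [map_sub]
      exact sub_eq_zero.2 h1
    intro k hk k' hk' hkk
    have h1 : ((G k : K₂) : F) = G k' := by rw [hkk]
    rw [hval k hk, hval k' hk'] at h1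
    have h2 := hinj (hΨm (hmem k hk)) (hΨm (hmem k' hk')) (sub_left_injective h1)
    have h3 := hΨi (hmem k hk) (hmem k' hk') h2
    exact Subtype.ext (add_left_cancel h3)
  have hG' : HasFDerivAt G (P.comp (A.comp K₁.subtypeL)) 0 := by
    have hΨ0 : HasFDerivAt Ψ (ContinuousLinearMap.id ℂ E) (a + ((0 : K₁) : E)) := by simpa using hΨ'
    have h1 : HasFDerivAt (fun k : K₁ => Ψ (a + (k : E)))
        ((ContinuousLinearMap.id ℂ E).comp K₁.subtypeL) 0 :=
      HasFDerivAt.comp (g := Ψ) (f := fun k : K₁ => a + (k : E)) 0 hΨ0 (hin 0)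
    have hf0 : HasFDerivAt f A (Ψ (a + ((0 : K₁) : E))) := by simpa [hΨa] using hfa
    have h2 : HasFDerivAt (fun k : K₁ => f (Ψ (a + (k : E)))) _ 0 :=
      HasFDerivAt.comp (g := f) (f := fun k : K₁ => Ψ (a + (k : E))) 0 hf0 h1
    exact P.hasFDerivAt.comp 0 (h2.sub_const (f a))
  have key := ih K₁ K₂ hK₁ hK₂ (ball 0 r) G isOpen_ball hGd hGi 0 (mem_ball_self hr)
  rw [hG'.fderiv] at key
  rw [injective_iff_map_eq_zero]
  intro x hx
  have hxK : x ∈ K₁ := by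
    change ℓ (A x) = 0
    rw [hx, map_zero]
  have h1 : (⟨x, hxK⟩ : K₁) = 0 := by
    apply key
    change P (A x) = P (A 0)
    rw [hx, map_zero A]
  exact congrArg Subtype.val h1

theorem scv_stepB {E F : Type} [NormedAddCommGroup E] [NormedSpace ℂ E]
    [FiniteDimensional ℂ E] [NormedAddCommGroup F] [NormedSpace ℂ F] [FiniteDimensional ℂ F]
    (hE : 2 ≤ Module.finrank ℂ E) (hEF : Module.finrank ℂ F = Module.finrank ℂ E)
    (U : Set E) (f : E → F)
    (hU : IsOpen U) (hf : DifferentiableOn ℂ f U) (hinj : InjOn f U)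
    (halt : ∀ x ∈ U, fderiv ℂ f x ≠ 0 → Function.Injective (fderiv ℂ f x)) (a : E) (ha : a ∈ U) :
    fderiv ℂ f a ≠ 0 := by
  intro ha0
  have hnt : Nontrivial E := Module.nontrivial_of_finrank_pos (R := ℂ) (by omega)
  have : CompleteSpace F := FiniteDimensional.complete ℂ F
  let L : F ≃L[ℂ] E := ContinuousLinearEquiv.ofFinrankEq hEF
  let B : E → E →L[ℂ] E := fun x => (L : F →L[ℂ] E).comp (fderiv ℂ f x)
  let h : E → ℂ := fun x => LinearMap.det (B x : E →ₗ[ℂ] E)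
  have hh : DifferentiableOn ℂ h U := by
    refine scv_det fun v => ?_
    exact (L : F →L[ℂ] E).differentiable.comp_differentiableOn (scv_dirderiv hU hf v)
  have hz1 : ∀ x, fderiv ℂ f x = 0 → h x = 0 := by
    intro x hx
    have : (B x : E →ₗ[ℂ] E) = 0 := by
      simp only [B, hx]
      ext y
      simp
    simp only [h, this]
    rw [LinearMap.det_zero, zero_pow (by omega)]
  have hz2 : ∀ x ∈ U, h x = 0 → fderiv ℂ f x = 0 := by
    intro x hx h0
    by_contra hne
    have h1 := halt x hx hne
    have h2 := LinearMap.bot_lt_ker_of_det_eq_zero h0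
    have h3 : LinearMap.ker (B x : E →ₗ[ℂ] E) = ⊥ :=
      LinearMap.ker_eq_bot.2 (L.injective.comp h1)
    rw [h3] at h2
    exact lt_irrefl _ h2
  obtain ⟨ρ, hρ, hρU⟩ := Metric.isOpen_iff.1 hU a ha
  have hlineconst : ∀ (Ψ : E → E) (b k : E) (r : ℝ), 0 < r → k ≠ 0 →
      DifferentiableOn ℂ Ψ (ball b r) → InjOn Ψ (ball b r) → MapsTo Ψ (ball b r) U →
      (∀ t : ℂ, b + t • k ∈ ball b r → h (Ψ (b + t • k)) = 0) → False := by
    intro Ψ b k r hr hk hΨd hΨi hΨm hΨz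
    have hk' : 0 < ‖k‖ := norm_pos_iff.2 hk
    have hmem : ∀ t ∈ ball (0:ℂ) (r / ‖k‖), b + t • k ∈ ball b r := by
      intro t ht
      rw [mem_ball, dist_eq_norm, add_sub_cancel_left, norm_smul]
      rw [mem_ball_zero_iff] at ht
      exact (lt_div_iff₀ hk').1 ht
    have hder : ∀ t ∈ ball (0:ℂ) (r / ‖k‖), HasDerivAt (fun t : ℂ => f (Ψ (b + t • k))) 0 t := by
      intro t ht
      have h2 : HasDerivAt (fun t : ℂ => b + t • k) k t := by
        simpa using ((hasDerivAt_id t).smul_const k).const_add b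
      have h3 : HasDerivAt (fun t : ℂ => Ψ (b + t • k)) _ t :=
        (hΨd.differentiableAt (isOpen_ball.mem_nhds (hmem t ht))).hasFDerivAt.comp_hasDerivAt t h2
      have h4 : HasFDerivAt f (0 : E →L[ℂ] F) (Ψ (b + t • k)) := by
        have h5 := hΨm (hmem t ht)
        rw [← hz2 _ h5 (hΨz t (hmem t ht))]
        exact (hf.differentiableAt (hU.mem_nhds h5)).hasFDerivAt
      exact h4.comp_hasDerivAt t h3
    have h0 : (0:ℂ) ∈ ball (0:ℂ) (r / ‖k‖) := mem_ball_self (by positivity)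
    have hs : ((r / ‖k‖ / 2 : ℝ) : ℂ) ∈ ball (0:ℂ) (r / ‖k‖) := by
      have : 0 < r / ‖k‖ := by positivity
      rw [mem_ball_zero_iff, Complex.norm_real, Real.norm_eq_abs, abs_of_pos (by positivity)]
      linarith
    have hc := isOpen_ball.is_const_of_deriv_eq_zero (convex_ball (0:ℂ) (r / ‖k‖)).isPreconnected
      (fun t ht => (hder t ht).differentiableAt.differentiableWithinAt)
      (fun t ht => (hder t ht).deriv) hs h0
    have h6 := hΨi (hmem _ hs) (hmem _ h0) (hinj (hΨm (hmem _ hs)) (hΨm (hmem _ h0)) hc)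
    have h7 := smul_left_injective ℂ hk (add_left_cancel h6)
    have h8 : r / ‖k‖ / 2 = 0 := by exact_mod_cast h7
    have : 0 < r / ‖k‖ := by positivity
    linarith
  by_cases hall : ∀ x ∈ ball a ρ, h x = 0
  · obtain ⟨k, hk⟩ := exists_ne (0:E)
    exact hlineconst id a k ρ hρ hk differentiableOn_id (injOn_id _) (fun x hx => hρU hx)
      (fun t ht => hall _ ht)
  obtain ⟨φ, hφd, hφz, b, hb, hb0, hφb⟩ := scv_c1 (hh.mono hρU) (hz1 a ha0) hρ hall
  obtain ⟨w, hw⟩ : ∃ w, fderiv ℂ φ b w ≠ 0 := by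
    by_contra hcon
    push Not at hcon
    exact hφb (ContinuousLinearMap.ext hcon)
  obtain ⟨Ψ, r, hr, hΨd, hΨi, hΨm, hΨz⟩ := scv_c2 isOpen_ball (hh.mono hρU) hφd hb hb0 hφz
    (v := (fderiv ℂ φ b w)⁻¹ • w) (by rw [map_smul, smul_eq_mul, inv_mul_cancel₀ hw])
  obtain ⟨k, hk, hk0⟩ : ∃ k, fderiv ℂ φ b k = 0 ∧ k ≠ 0 := by
    have h1 : LinearMap.ker (fderiv ℂ φ b : E →ₗ[ℂ] ℂ) ≠ ⊥ :=
      LinearMap.ker_ne_bot_of_finrank_lt (by rw [Module.finrank_self]; omega)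
    obtain ⟨k, hk, hk0⟩ := Submodule.exists_mem_ne_zero_of_ne_bot h1
    exact ⟨k, hk, hk0⟩
  refine hlineconst Ψ b k r hr hk0 hΨd hΨi (fun x hx => hρU (hΨm hx)) fun t ht => hΨz _ ht ?_
  rw [add_sub_cancel_left, map_smul, hk, smul_zero]

/-- Osgood: an injective holomorphic map between spaces of equal dimension has injective
derivative everywhere. -/
theorem scv_osgood (n : ℕ) : ∀ (E F : Type) [NormedAddCommGroup E] [NormedSpace ℂ E]
      [FiniteDimensional ℂ E] [NormedAddCommGroup F] [NormedSpace ℂ F] [FiniteDimensional ℂ F]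
      (_ : Module.finrank ℂ E = n) (_ : Module.finrank ℂ F = n) (U : Set E) (f : E → F)
      (_ : IsOpen U) (_ : DifferentiableOn ℂ f U) (_ : InjOn f U), ∀ x ∈ U,
      Function.Injective (fderiv ℂ f x) := by
  induction n with
  | zero =>
    intro E F _ _ _ _ _ _ hE hF U f hU hf hinj x hx
    have : Subsingleton E := Module.finrank_zero_iff.1 hE
    exact Function.injective_of_subsingleton _
  | succ n ih =>
    intro E F _ _ _ _ _ _ hE hF U f hU hf hinj x hx
    have hA := scv_stepA n ih hE hF U f hU hf hinj
    refine hA x hx ?_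
    rcases Nat.eq_zero_or_pos n with hn | hn
    · subst hn
      let e₁ : ℂ ≃L[ℂ] E := ContinuousLinearEquiv.ofFinrankEq (by rw [hE, Module.finrank_self])
      let e₂ : F ≃L[ℂ] ℂ := ContinuousLinearEquiv.ofFinrankEq (by rw [hF, Module.finrank_self])
      intro h0
      have hd : ∀ y ∈ U, DifferentiableAt ℂ f y := fun y hy => hf.differentiableAt (hU.mem_nhds hy)
      have hx' : e₁.symm x ∈ e₁ ⁻¹' U := by simpa using hx
      have h1 := scv_one (f := fun t => e₂ (f (e₁ t))) (U := e₁ ⁻¹' U) (a := e₁.symm x)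
        (hU.preimage e₁.continuous)
        (fun t ht => (e₂.differentiableAt.comp t
          ((hd _ ht).comp t e₁.differentiableAt)).differentiableWithinAt)
        (fun s hs t ht hst => e₁.injective (hinj hs ht (e₂.injective hst))) hx'
      apply h1
      have h2 : HasFDerivAt f (0 : E →L[ℂ] F) (e₁ (e₁.symm x)) := by
        rw [e₁.apply_symm_apply, ← h0]
        exact (hd x hx).hasFDerivAt
      have h3 : HasFDerivAt (fun t => e₂ (f (e₁ t)))
          ((e₂ : F →L[ℂ] ℂ).comp ((0 : E →L[ℂ] F).comp (e₁ : ℂ →L[ℂ] E))) (e₁.symm x) :=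
        e₂.hasFDerivAt.comp _ (h2.comp _ e₁.hasFDerivAt)
      have h4 := h3.hasDerivAt.deriv
      rw [h4]
      simp
    · exact scv_stepB (by omega) (by omega) U f hU hf hinj (fun y hy => hA y hy) x hx

end SCV3

section SCV4
open Topology NNReal

theorem scv_tendsto_prod {ι α β : Type*} [TopologicalSpace α] [UniformSpace β] {F : ι → α → β}
    {f : α → β} {p : Filter ι} {s : Set α} (h : TendstoLocallyUniformlyOn F f p s) {x : α}
    (hx : x ∈ s) (hc : ContinuousWithinAt f s x) :
    Tendsto (fun y : ι × α => F y.1 y.2) (p ×ˢ 𝓝[s] x) (𝓝 (f x)) := by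
  have h1 := tendstoLocallyUniformlyOn_iff_forall_tendsto.1 h x hx
  exact (Uniform.tendsto_congr h1).1 (Tendsto.comp hc tendsto_snd)

theorem scv_comp_cont {ι α β γ : Type*} [TopologicalSpace α] [UniformSpace β] [UniformSpace γ]
    {F : ι → α → β} {f : α → β} {p : Filter ι} {s : Set α} (h : TendstoLocallyUniformlyOn F f p s)
    (hc : ContinuousOn f s) {φ : β → γ} (hφ : Continuous φ) :
    TendstoLocallyUniformlyOn (fun i x => φ (F i x)) (fun x => φ (f x)) p s := by
  rw [tendstoLocallyUniformlyOn_iff_forall_tendsto]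
  intro x hx
  have h1 := (hφ.tendsto _).comp (scv_tendsto_prod h hx (hc x hx))
  have h2 : Tendsto (fun y : ι × α => φ (f y.2)) (p ×ˢ 𝓝[s] x) (𝓝 (φ (f x))) :=
    (hφ.tendsto _).comp (Tendsto.comp (hc x hx) tendsto_snd)
  exact (h2.prodMk_nhds h1).mono_right (nhds_le_uniformity _)

theorem scv_hurwitz {F : ℕ → ℂ → ℂ} {G : ℂ → ℂ} {R : ℝ}
    (hF : ∀ k, DifferentiableOn ℂ (F k) (ball 0 R))
    (hlim : TendstoLocallyUniformlyOn F G atTop (ball 0 R))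
    (hF0 : ∀ k, ∀ t ∈ ball (0:ℂ) R, F k t ≠ 0) (hG0 : G 0 ≠ 0) {t : ℂ} (ht : t ∈ ball (0:ℂ) R) :
    G t ≠ 0 := by
  intro hGt
  have hG : DifferentiableOn ℂ G (ball 0 R) := (scv_limit isOpen_ball hF hlim).1
  have hR : 0 < R := pos_of_mem_ball ht
  have han : AnalyticOnNhd ℂ G (ball 0 R) := hG.analyticOnNhd isOpen_ball
  have hne : ∀ᶠ s in 𝓝[≠] t, G s ≠ 0 := by
    refine ((han t ht).eventually_eq_zero_or_eventually_ne_zero).resolve_left fun h => ?_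
    exact hG0 (han.eqOn_zero_of_preconnected_of_eventuallyEq_zero
      (convex_ball (0:ℂ) R).isPreconnected ht h (mem_ball_self hR))
  rw [eventually_nhdsWithin_iff] at hne
  obtain ⟨r, hr, hball⟩ := (Metric.nhds_basis_closedBall.eventually_iff).1
    (hne.and (isOpen_ball.eventually_mem ht))
  have hsub : closedBall t r ⊆ ball 0 R := fun s hs => (hball hs).2
  have hsph : IsCompact (sphere t r) := isCompact_sphere t r
  obtain ⟨s, hs, hmin⟩ := hsph.exists_isMinOn (NormedSpace.sphere_nonempty.2 hr.le)
    ((hG.continuousOn.mono (sphere_subset_closedBall.trans hsub)).norm)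
  have hst : s ≠ t := fun h => by
    rw [h, mem_sphere, dist_self] at hs
    linarith
  have hc : 0 < ‖G s‖ := norm_pos_iff.2 ((hball (sphere_subset_closedBall hs)).1 hst)
  have hu := (tendstoLocallyUniformlyOn_iff_forall_isCompact isOpen_ball).1 hlim _ hsub
    (isCompact_closedBall t r)
  rw [Metric.tendstoUniformlyOn_iff] at hu
  obtain ⟨k, hk⟩ := (hu (‖G s‖ / 2) (by positivity)).exists
  have h1 := scv_minmod (F := F k) (t := t) (c := ‖G s‖ / 2) hr (by positivity)
    (fun y hy => (hF k).differentiableAt (isOpen_ball.mem_nhds (hsub hy)))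
    (fun y hy => hF0 k y (hsub hy))
    (fun y hy => by
      have h2 := hk y (sphere_subset_closedBall hy)
      have h3 : ‖G s‖ ≤ ‖G y‖ := hmin hy
      rw [dist_eq_norm] at h2
      have h4 := norm_sub_norm_le (G y) (F k y)
      linarith)
  have h2 := hk t (mem_closedBall_self hr.le)
  rw [hGt, dist_eq_norm, zero_sub, norm_neg] at h2
  linarith

theorem scv_equiv {E : Type*} [NormedAddCommGroup E] [NormedSpace ℂ E] [FiniteDimensional ℂ E]
    (A : E →L[ℂ] E) (hA : Function.Injective A) : ∃ e : E ≃L[ℂ] E, (e : E →L[ℂ] E) = A := by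
  refine ⟨(LinearEquiv.ofInjectiveEndo (A : E →ₗ[ℂ] E) hA).toContinuousLinearEquiv, ?_⟩
  ext x
  rfl

theorem scv_inverse {E : Type} [NormedAddCommGroup E] [NormedSpace ℂ E] [FiniteDimensional ℂ E]
    {Ω B : Set E} (hΩ : IsOpen Ω) (hB : IsOpen B) {f g : E → E} (hf : DifferentiableOn ℂ f Ω)
    (hinj : InjOn f Ω) (hg : ∀ w ∈ B, g w ∈ Ω ∧ f (g w) = w) {w : E} (hw : w ∈ B) :
    DifferentiableAt ℂ g w ∧ Function.Injective (fderiv ℂ g w) := by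
  have : CompleteSpace E := FiniteDimensional.complete ℂ E
  obtain ⟨hx, hfx⟩ := hg w hw
  obtain ⟨e, he⟩ := scv_equiv _ (scv_osgood _ E E rfl rfl Ω f hΩ hf hinj (g w) hx)
  have hs : HasStrictFDerivAt f (e : E →L[ℂ] E) (g w) := by
    rw [he]
    exact ((scv_contDiffOn hΩ 1 hf).contDiffAt (hΩ.mem_nhds hx)).hasStrictFDerivAt (by simp)
  have h1 := hs.to_localInverse.hasFDerivAt
  have h2 := hs.eventually_right_inverse
  have h3 := hs.localInverse_apply_image
  rw [hfx] at h1 h2 h3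
  have h4 : HasFDerivAt g (e.symm : E →L[ℂ] E) w := by
    refine h1.congr_of_eventuallyEq ?_
    have h5 : ∀ᶠ y in 𝓝 w, hs.localInverse f e (g w) y ∈ Ω :=
      h1.continuousAt.eventually_mem (by rw [h3]; exact hΩ.mem_nhds hx)
    filter_upwards [h2, h5, hB.mem_nhds hw] with y hy1 hy2 hy3
    exact hinj (hg y hy3).1 hy2 ((hg y hy3).2.trans hy1.symm)
  refine ⟨h4.differentiableAt, ?_⟩
  rw [h4.fderiv]
  exact e.symm.injective

theorem scv_surj {E : Type*} [NormedAddCommGroup E] [NormedSpace ℂ E] [FiniteDimensional ℂ E]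
    [Nontrivial E] {V : Set E} (hV : IsOpen V) {F : ℕ → E → E} {g : E → E}
    (hF : ∀ k, DifferentiableOn ℂ (F k) V) (hlim : TendstoLocallyUniformlyOn F g atTop V)
    {w : E} (hw : w ∈ V) (hinj : Function.Injective (fderiv ℂ g w)) :
    ∃ k, g w ∈ F k '' V := by
  have : CompleteSpace E := FiniteDimensional.complete ℂ E
  obtain ⟨hg, hlim'⟩ := scv_limit hV hF hlim
  have hgc : ContinuousOn (fderiv ℂ g) V := by
    have := (scv_contDiffOn hV 1 hg)
    exact this.continuousOn_fderiv_of_isOpen hV (by simp)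
  obtain ⟨e, he⟩ := scv_equiv _ hinj
  have hN : 0 < ‖(e.symm : E →L[ℂ] E)‖₊ := e.nnnorm_symm_pos
  set N := ‖(e.symm : E →L[ℂ] E)‖₊ with hNdef
  let c : ℝ≥0 := N⁻¹ / 2
  have hc : 0 < c := by positivity
  have h1 := scv_tendsto_prod hlim' hw (hgc w hw)
  rw [hV.nhdsWithin_eq hw] at h1
  have h2 : ∀ᶠ y : ℕ × E in atTop ×ˢ 𝓝 w, dist (fderiv ℂ (F y.1) y.2) (fderiv ℂ g w) < c :=
    h1.eventually (ball_mem_nhds _ (NNReal.coe_pos.2 hc))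
  obtain ⟨pa, hpa, pb, hpb, hab⟩ := eventually_prod_iff.1 h2
  obtain ⟨ε, hε, hball⟩ := (Metric.nhds_basis_closedBall.eventually_iff).1
    (hpb.and (hV.eventually_mem hw))
  have h3 : ∀ᶠ k in atTop, dist (F k w) (g w) < ((N:ℝ)⁻¹ - c) * ε := by
    have h4 : Tendsto (fun k => F k w) atTop (𝓝 (g w)) := hlim.tendsto_at hw
    refine h4.eventually (ball_mem_nhds _ ?_)
    have : (0:ℝ) < N := NNReal.coe_pos.2 hN
    have h5 : (N:ℝ)⁻¹ - c = (N:ℝ)⁻¹ / 2 := by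
      simp only [c]
      push_cast
      ring
    rw [h5]
    positivity
  obtain ⟨k, hka, hkd⟩ := (hpa.and h3).exists
  have happ : ApproximatesLinearOn (F k) (e : E →L[ℂ] E) (closedBall w ε) c := by
    intro x hx y hy
    have h6 := Convex.norm_image_sub_le_of_norm_fderiv_le' (𝕜 := ℂ) (f := F k)
      (φ := (e : E →L[ℂ] E)) (C := c) (s := closedBall w ε)
      (fun z hz => (hF k).differentiableAt (hV.mem_nhds (hball hz).2))
      (fun z hz => by
        have := hab hka (hball hz).1
        rw [dist_eq_norm] at this
        rw [he]
        exact this.le)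
      (convex_closedBall _ _) hy hx
    exact h6
  have hsurj := happ.surjOn_closedBall_of_nonlinearRightInverse e.toNonlinearRightInverse hε.le
    subset_rfl
  obtain ⟨y, hy, hyw⟩ := hsurj (a := g w) (by
    rw [mem_closedBall, dist_comm]
    exact hkd.le)
  exact ⟨k, y, (hball hy).2, hyw⟩

end SCV4

/-- Let f_j : Ω → 𝔹ⁿ be injective holomorphic maps on a domain Ω
with f_j(z₀) = 0, converging u.o.c. to f.  Suppose B_{1-δ}(0) ⊆ f_j(Ω), let
g_j : B_{1-δ}(0) → Ω be the inverses of f_j, and suppose g_j → g u.o.c. with g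
nonconstant.  Then f ∘ g = id on B_{1-δ}(0) with g mapping into Ω (so f
restricted to g(B_{1-δ}(0)) is the inverse of g), and B_{1-δ}(0) ⊆ f(Ω). -/
theorem limit_embedding_contains_ball {n : ℕ}
    (Ω : Set (EuclideanSpace ℂ (Fin n))) (hΩopen : IsOpen Ω) (hΩconn : IsConnected Ω)
    (z₀ : EuclideanSpace ℂ (Fin n)) (hz₀ : z₀ ∈ Ω)
    (δ : ℝ) (hδ0 : 0 < δ) (hδ1 : δ < 1)
    (fseq : ℕ → EuclideanSpace ℂ (Fin n) → EuclideanSpace ℂ (Fin n))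
    (hf_holo : ∀ j, DifferentiableOn ℂ (fseq j) Ω)
    (hf_inj : ∀ j, Set.InjOn (fseq j) Ω)
    (hf_ball : ∀ j, fseq j '' Ω ⊆ ball 0 1)
    (hf_z₀ : ∀ j, fseq j z₀ = 0)
    (f : EuclideanSpace ℂ (Fin n) → EuclideanSpace ℂ (Fin n))
    (hf_lim : TendstoLocallyUniformlyOn (fun j => fseq j) f atTop Ω)
    (gseq : ℕ → EuclideanSpace ℂ (Fin n) → EuclideanSpace ℂ (Fin n))
    (hg_inv : ∀ j, ∀ w ∈ ball (0 : EuclideanSpace ℂ (Fin n)) (1 - δ),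
      gseq j w ∈ Ω ∧ fseq j (gseq j w) = w)
    (g : EuclideanSpace ℂ (Fin n) → EuclideanSpace ℂ (Fin n))
    (hg_lim : TendstoLocallyUniformlyOn (fun j => gseq j) g atTop
      (ball (0 : EuclideanSpace ℂ (Fin n)) (1 - δ)))
    (hg_nonconst : ¬ ∃ c, Set.EqOn g (fun _ => c)
      (ball (0 : EuclideanSpace ℂ (Fin n)) (1 - δ))) :
    (∀ w ∈ ball (0 : EuclideanSpace ℂ (Fin n)) (1 - δ), g w ∈ Ω ∧ f (g w) = w) ∧
      ball (0 : EuclideanSpace ℂ (Fin n)) (1 - δ) ⊆ f '' Ω := by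
  have hBopen : IsOpen (ball (0 : EuclideanSpace ℂ (Fin n)) (1 - δ)) := isOpen_ball
  have hR : 0 < 1 - δ := by linarith
  have h0B : (0 : EuclideanSpace ℂ (Fin n)) ∈ ball (0 : EuclideanSpace ℂ (Fin n)) (1 - δ) :=
    mem_ball_self hR
  have hnt : Nontrivial (EuclideanSpace ℂ (Fin n)) := by
    by_contra h
    rw [not_nontrivial_iff_subsingleton] at h
    exact hg_nonconst ⟨0, fun x _ => Subsingleton.elim _ _⟩
  have hginv := fun j => fun w (hw : w ∈ ball (0 : EuclideanSpace ℂ (Fin n)) (1 - δ)) =>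
    scv_inverse hΩopen hBopen (hf_holo j) (hf_inj j) (hg_inv j) hw
  have hgd : ∀ j, DifferentiableOn ℂ (gseq j) (ball 0 (1 - δ)) := fun j w hw =>
    (hginv j w hw).1.differentiableWithinAt
  obtain ⟨hg, hglim'⟩ := scv_limit hBopen hgd hg_lim
  have hf : DifferentiableOn ℂ f Ω := (scv_limit hΩopen hf_holo hf_lim).1
  have hfg : ∀ w ∈ ball (0 : EuclideanSpace ℂ (Fin n)) (1 - δ), g w ∈ Ω → f (g w) = w := by
    intro w hw hgw
    have h1 := scv_tendsto_prod hf_lim hgw (hf.continuousOn _ hgw)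
    have h2 : Tendsto (fun j => gseq j w) atTop (nhdsWithin (g w) Ω) :=
      tendsto_nhdsWithin_iff.2 ⟨hg_lim.tendsto_at hw,
        Eventually.of_forall fun j => (hg_inv j w hw).1⟩
    have h3 := h1.comp (tendsto_id.prodMk h2)
    have h4 : ((fun y : ℕ × EuclideanSpace ℂ (Fin n) => fseq y.1 y.2) ∘
        fun j => (id j, gseq j w)) = fun _ => w := by
      funext j
      exact (hg_inv j w hw).2
    rw [h4] at h3
    exact tendsto_nhds_unique h3 tendsto_const_nhds
  have hg0 : g 0 = z₀ := by
    have h1 : ∀ j, gseq j 0 = z₀ := fun j =>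
      hf_inj j (hg_inv j 0 h0B).1 hz₀ ((hg_inv j 0 h0B).2.trans (hf_z₀ j).symm)
    have h2 := hg_lim.tendsto_at h0B
    simp only [h1] at h2
    exact tendsto_nhds_unique h2 tendsto_const_nhds
  have hgdiff : ∀ w ∈ ball (0 : EuclideanSpace ℂ (Fin n)) (1 - δ), DifferentiableAt ℂ g w :=
    fun w hw => hg.differentiableAt (hBopen.mem_nhds hw)
  have hg0inj : Function.Injective (fderiv ℂ g 0) := by
    have h1 : HasFDerivAt f (fderiv ℂ f z₀) (g 0) := by
      rw [hg0]
      exact (hf.differentiableAt (hΩopen.mem_nhds hz₀)).hasFDerivAt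
    have h2 := h1.comp 0 (hgdiff 0 h0B).hasFDerivAt
    have h3 : HasFDerivAt (f ∘ g) (ContinuousLinearMap.id ℂ (EuclideanSpace ℂ (Fin n))) 0 := by
      refine (hasFDerivAt_id 0).congr_of_eventuallyEq ?_
      have h4 : ∀ᶠ y in nhds (0 : EuclideanSpace ℂ (Fin n)), g y ∈ Ω :=
        (hgdiff 0 h0B).continuousAt.eventually_mem (by rw [hg0]; exact hΩopen.mem_nhds hz₀)
      filter_upwards [h4, hBopen.mem_nhds h0B] with y hy1 hy2
      exact hfg y hy2 hy1
    have h4 := h2.unique h3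
    intro x y hxy
    have h5 := congrArg (fun A => A x) h4
    have h6 := congrArg (fun A => A y) h4
    simp only [ContinuousLinearMap.comp_apply, ContinuousLinearMap.id_apply] at h5 h6
    rw [← h5, ← h6, hxy]
  have hdet1 : ∀ A : EuclideanSpace ℂ (Fin n) →L[ℂ] EuclideanSpace ℂ (Fin n),
      Function.Injective A → A.det ≠ 0 := by
    intro A hA h0
    have h2 := LinearMap.bot_lt_ker_of_det_eq_zero h0
    rw [LinearMap.ker_eq_bot.2 hA] at h2
    exact lt_irrefl _ h2
  have hdet2 : ∀ A : EuclideanSpace ℂ (Fin n) →L[ℂ] EuclideanSpace ℂ (Fin n),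
      A.det ≠ 0 → Function.Injective A := by
    intro A hA
    have h0 : LinearMap.det
        (A : EuclideanSpace ℂ (Fin n) →ₗ[ℂ] EuclideanSpace ℂ (Fin n)) ≠ 0 := hA
    exact (LinearMap.equivOfDetNeZero _ h0).injective
  have hgc : ContinuousOn (fderiv ℂ g) (ball 0 (1 - δ)) :=
    (scv_contDiffOn hBopen 1 hg).continuousOn_fderiv_of_isOpen hBopen (by simp)
  have hinj : ∀ w ∈ ball (0 : EuclideanSpace ℂ (Fin n)) (1 - δ),
      Function.Injective (fderiv ℂ g w) := by
    intro w hw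
    by_cases hw0 : w = 0
    · rw [hw0]; exact hg0inj
    have hwp : 0 < ‖w‖ := norm_pos_iff.2 hw0
    have hmaps : MapsTo (fun t : ℂ => t • w) (ball (0:ℂ) ((1 - δ) / ‖w‖))
        (ball (0 : EuclideanSpace ℂ (Fin n)) (1 - δ)) := by
      intro t ht
      rw [mem_ball_zero_iff] at ht
      rw [mem_ball_zero_iff, norm_smul]
      exact (lt_div_iff₀ hwp).1 ht
    have hcont : Continuous (fun t : ℂ => t • w) := by fun_prop
    have hl1 := scv_comp_cont (hglim'.comp _ hmaps hcont.continuousOn)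
      (hgc.comp hcont.continuousOn hmaps) ContinuousLinearMap.continuous_det
    have h1 := scv_hurwitz (R := (1 - δ) / ‖w‖) (t := 1)
      (F := fun j t => (fderiv ℂ (gseq j) (t • w)).det)
      (G := fun t => (fderiv ℂ g (t • w)).det)
      (fun j => scv_det (A := fun t : ℂ => fderiv ℂ (gseq j) (t • w)) fun v =>
        (scv_dirderiv hBopen (hgd j) v).comp (f := fun t : ℂ => t • w) (by fun_prop) hmaps)
      hl1 (fun j t ht => hdet1 _ (hginv j _ (hmaps ht)).2)
      (by simpa using hdet1 _ hg0inj)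
      (by
        rw [mem_ball_zero_iff, norm_one]
        rw [mem_ball_zero_iff] at hw
        exact (one_lt_div hwp).2 hw)
    simp only [one_smul] at h1
    exact hdet2 _ h1
  have hmain : ∀ w ∈ ball (0 : EuclideanSpace ℂ (Fin n)) (1 - δ), g w ∈ Ω ∧ f (g w) = w := by
    intro w hw
    obtain ⟨k, y, hy, hyw⟩ := scv_surj hBopen hgd hg_lim hw (hinj w hw)
    have hgw : g w ∈ Ω := by
      rw [← hyw]
      exact (hg_inv k y hy).1
    exact ⟨hgw, hfg w hw hgw⟩
  exact ⟨hmain, fun w hw => ⟨g w, (hmain w hw).1, (hmain w hw).2⟩⟩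
end
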